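/- arXiv:2502.06264 — 3 statements merged into one kernel-verified Lean document; each statement's English description precedes it below -/
import Mathlib

section
/- Let K be an arbitrary field and n ≥ 5. In the flip graph of the polynomial multiplication tensor T_{n,2} there is a path (consisting of flips and reductions) that leads from the standard representation {(a_i, b_j, c_{i+j}) : 0 ≤ i ≤ n, 0 ≤ j ≤ 2} to a representation of length 2n+1. -/
open Polynomial TensorProduct

namespace FlipGraph

variable (K : Type) [Field K]

/-- A triple `(u, v, w)` of polynomials, standing for the rank-one tensor `u ⊗ v ⊗ w`. -/
abbrev Triple := Polynomial K × Polynomial K × Polynomial K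

/-- The rank-one tensor `u ⊗ v ⊗ w` represented by a triple. -/
noncomputable def tensorOf (t : Triple K) :
    TensorProduct K (Polynomial K) (TensorProduct K (Polynomial K) (Polynomial K)) :=
  t.1 ⊗ₜ[K] (t.2.1 ⊗ₜ[K] t.2.2)

/-- The tensor represented by a representation (a multiset of triples). -/
noncomputable def tensorOfRep (S : Multiset (Triple K)) :
    TensorProduct K (Polynomial K) (TensorProduct K (Polynomial K) (Polynomial K)) :=
  (S.map (tensorOf K)).sum

/-- Two representations are equivalent up to rescaling: each triple is replaced by another
triple representing the same rank-one tensor (nonzero scalar factors being moved between the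
three components). Such rescalings are not counted as steps. -/
def ReEq (S S' : Multiset (Triple K)) : Prop :=
  S.map (tensorOf K) = S'.map (tensorOf K)

/-- A flip replaces two triples that agree in one position by two new triples: for a shared
first component and any `l ∈ K`, `(u, v₁, w₁), (u, v₂, w₂) ↦ (u, v₁ − l·v₂, w₁),
(u, v₂, w₂ + l·w₁)`, and analogously when the shared component is the second or the third. -/
def IsFlip (S S' : Multiset (Triple K)) : Prop :=
  ∃ (T : Multiset (Triple K)) (l : K),
    (∃ u v₁ w₁ v₂ w₂, S = (u, v₁, w₁) ::ₘ (u, v₂, w₂) ::ₘ T ∧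
        S' = (u, v₁ - l • v₂, w₁) ::ₘ (u, v₂, w₂ + l • w₁) ::ₘ T) ∨
    (∃ v u₁ w₁ u₂ w₂, S = (u₁, v, w₁) ::ₘ (u₂, v, w₂) ::ₘ T ∧
        S' = (u₁ - l • u₂, v, w₁) ::ₘ (u₂, v, w₂ + l • w₁) ::ₘ T) ∨
    (∃ w u₁ v₁ u₂ v₂, S = (u₁, v₁, w) ::ₘ (u₂, v₂, w) ::ₘ T ∧
        S' = (u₁ - l • u₂, v₁, w) ::ₘ (u₂, v₂ + l • v₁, w) ::ₘ T)

/-- A reduction replaces two triples that agree in two positions by their sum in the remaining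
position, e.g. `(u₁, v, w), (u₂, v, w) ↦ (u₁ + u₂, v, w)`. -/
def IsReduction (S S' : Multiset (Triple K)) : Prop :=
  ∃ T : Multiset (Triple K),
    (∃ u₁ u₂ v w, S = (u₁, v, w) ::ₘ (u₂, v, w) ::ₘ T ∧ S' = (u₁ + u₂, v, w) ::ₘ T) ∨
    (∃ u v₁ v₂ w, S = (u, v₁, w) ::ₘ (u, v₂, w) ::ₘ T ∧ S' = (u, v₁ + v₂, w) ::ₘ T) ∨
    (∃ u v w₁ w₂, S = (u, v, w₁) ::ₘ (u, v, w₂) ::ₘ T ∧ S' = (u, v, w₁ + w₂) ::ₘ T)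

/-- `Path K S S' f r` means that in the flip graph there is a path from representation `S` to
representation `S'` consisting of `f` flips and `r` reductions (interleaved with arbitrarily
many uncounted rescalings). -/
inductive Path : Multiset (Triple K) → Multiset (Triple K) → ℕ → ℕ → Prop
  | refl (S : Multiset (Triple K)) : Path S S 0 0
  | rescale {S S' T : Multiset (Triple K)} {f r : ℕ} :
      ReEq K S S' → Path S' T f r → Path S T f r
  | flip {S S' T : Multiset (Triple K)} {f r : ℕ} :
      IsFlip K S S' → Path S' T f r → Path S T (f + 1) r
  | reduce {S S' T : Multiset (Triple K)} {f r : ℕ} :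
      IsReduction K S S' → Path S' T f r → Path S T f (r + 1)

/-- The standard representation of the polynomial multiplication tensor `T_{n,m}`:
the multiset of triples `(a_i, b_j, c_{i+j})` for `0 ≤ i ≤ n`, `0 ≤ j ≤ m`. -/
noncomputable def stdRep (n m : ℕ) : Multiset (Triple K) :=
  (Finset.range (n + 1) ×ˢ Finset.range (m + 1)).val.map
    fun p => ((X : Polynomial K) ^ p.1, (X : Polynomial K) ^ p.2,
              (X : Polynomial K) ^ (p.1 + p.2))

end FlipGraph

open FlipGraph

/-!
Sort the triples of `T_{n,2}` into three columns `∑ᵢ aᵢ ⊗ b_j ⊗ c_{i+j}`, `j = 0, 1, 2`. Flips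
sharing `b_j`, together with rescalings, act on a column `∑ᵢ eᵢ ⊗ b_j ⊗ fᵢ` as elementary
matrices, so any matrix can be moved from the `eᵢ` to the `fᵢ`. Consequently products
`u_s ⊗ b_j ⊗ w_s` can be split off a column, each replacing one of its triples, as soon as the
pairings of the `u_s` with the `w_t` form an identity matrix. Copies of `u ⊗ b_j ⊗ w` split off
from the columns `j ∈ J` are merged by reductions into the single triple `u ⊗ (∑_{j ∈ J} b_j) ⊗ w`,
which saves `#J - 1` triples.

Length `2n + 1` requires saving one triple more than the number `n + 1` of rows. Karatsuba's trick
saves three triples on three rows, so it suffices to gain the additional triple on six, seven and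
eight rows. This is where evaluation at `x = 1` enters: its product is common to all three columns.
-/

namespace FlipGraph

variable {K : Type} [Field K]

section Matrix

open Matrix

variable {ι κ σ : Type*} [Fintype ι]

theorem sum_mul_smul {R M : Type*} [Semiring R] [AddCommMonoid M] [Module R M] [Fintype κ]
    (A : Matrix σ ι R) (B : Matrix ι κ R) (e : κ → M) (a : σ) :
    ∑ b, (A * B) a b • e b = ∑ i, A a i • ∑ b, B i b • e b := by
  simp only [mul_apply, Finset.sum_smul, mul_smul, Finset.smul_sum]
  exact Finset.sum_comm

theorem exists_mul_add_mul_eq_one {F : Type*} [Field F] [Fintype σ] [DecidableEq ι]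
    [DecidableEq σ] {A : Matrix σ ι F} {B : Matrix ι σ F} (h : A * B = 1) :
    ∃ (m : ℕ) (C : Matrix ι (Fin m) F) (D : Matrix (Fin m) ι F),
      m + Fintype.card σ = Fintype.card ι ∧ B * A + C * D = 1 := by
  have hsurj : Function.Surjective A.mulVecLin := fun y => ⟨B *ᵥ y, by simp [h]⟩
  have hmem (x : ι → F) : x - B *ᵥ A *ᵥ x ∈ LinearMap.ker A.mulVecLin := by
    simp [mulVec_sub, ← Matrix.mul_assoc, h]
  -- `1 - B * A` maps into the kernel of `A`, so a basis of that kernel factors it as `C * D`.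
  let p : (ι → F) →ₗ[F] LinearMap.ker A.mulVecLin :=
    (LinearMap.id - B.mulVecLin ∘ₗ A.mulVecLin).codRestrict _ hmem
  let c := Module.finBasis F (LinearMap.ker A.mulVecLin)
  refine ⟨_, of fun i t => (c t : ι → F) i, LinearMap.toMatrix' (c.equivFun ∘ₗ p), ?_, ?_⟩
  · have hrank := A.mulVecLin.finrank_range_add_finrank_ker
    rw [LinearMap.range_eq_top.2 hsurj, finrank_top] at hrank
    simpa [add_comm] using hrank
  · have hcoord (y : LinearMap.ker A.mulVecLin) :
        (of fun i t => (c t : ι → F) i) *ᵥ c.repr y = y := by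
      have hsum := congrArg Subtype.val (c.sum_repr y)
      rw [Submodule.coe_sum] at hsum
      refine Eq.trans ?_ hsum
      ext i
      simp [mulVec, dotProduct, mul_comm]
    have hp (x : ι → F) : (p x : ι → F) = x - B *ᵥ A *ᵥ x := rfl
    refine toLin'.injective (LinearMap.ext fun x => ?_)
    simp [hcoord, hp]

end Matrix

/-- `Reachable S T`: some path in the flip graph leads from `S` to `T`. -/
def Reachable (S T : Multiset (Triple K)) : Prop :=
  ∃ f r, Path K S T f r

section Reachable

variable {S T U S' T' : Multiset (Triple K)} {f r f' r' : ℕ}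

theorem ReEq.add_right (h : ReEq K S T) (U : Multiset (Triple K)) : ReEq K (S + U) (T + U) := by
  simp only [ReEq, Multiset.map_add] at h ⊢
  rw [h]

theorem IsFlip.add_right (h : IsFlip K S T) (U : Multiset (Triple K)) :
    IsFlip K (S + U) (T + U) := by
  obtain ⟨V, l, h⟩ := h
  refine ⟨V + U, l, ?_⟩
  rcases h with ⟨x, a, b, c, d, rfl, rfl⟩ | ⟨x, a, b, c, d, rfl, rfl⟩ | ⟨x, a, b, c, d, rfl, rfl⟩
  · exact .inl ⟨x, a, b, c, d, by simp, by simp⟩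
  · exact .inr (.inl ⟨x, a, b, c, d, by simp, by simp⟩)
  · exact .inr (.inr ⟨x, a, b, c, d, by simp, by simp⟩)

theorem IsReduction.add_right (h : IsReduction K S T) (U : Multiset (Triple K)) :
    IsReduction K (S + U) (T + U) := by
  obtain ⟨V, h⟩ := h
  refine ⟨V + U, ?_⟩
  rcases h with ⟨a, b, c, d, rfl, rfl⟩ | ⟨a, b, c, d, rfl, rfl⟩ | ⟨a, b, c, d, rfl, rfl⟩
  · exact .inl ⟨a, b, c, d, by simp, by simp⟩
  · exact .inr (.inl ⟨a, b, c, d, by simp, by simp⟩)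
  · exact .inr (.inr ⟨a, b, c, d, by simp, by simp⟩)

theorem Path.trans (h : Path K S T f r) (h' : Path K T U f' r') :
    Path K S U (f + f') (r + r') := by
  induction h with
  | refl S => simpa using h'
  | rescale e _ ih => exact .rescale e (ih h')
  | flip e _ ih => rw [Nat.add_right_comm]; exact .flip e (ih h')
  | reduce e _ ih => rw [Nat.add_right_comm]; exact .reduce e (ih h')

theorem Path.add_right (h : Path K S T f r) (U : Multiset (Triple K)) :
    Path K (S + U) (T + U) f r := by
  induction h with
  | refl S => exact .refl _
  | rescale e _ ih => exact .rescale (e.add_right U) ih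
  | flip e _ ih => exact .flip (e.add_right U) ih
  | reduce e _ ih => exact .reduce (e.add_right U) ih

theorem ReEq.reachable (h : ReEq K S T) : Reachable S T :=
  ⟨_, _, .rescale h (.refl T)⟩

theorem IsFlip.reachable (h : IsFlip K S T) : Reachable S T :=
  ⟨_, _, .flip h (.refl T)⟩

theorem IsReduction.reachable (h : IsReduction K S T) : Reachable S T :=
  ⟨_, _, .reduce h (.refl T)⟩

@[refl]
theorem Reachable.refl (S : Multiset (Triple K)) : Reachable S S :=
  ⟨0, 0, .refl S⟩

@[trans]
theorem Reachable.trans : Reachable S T → Reachable T U → Reachable S U := by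
  rintro ⟨_, _, h⟩ ⟨_, _, h'⟩
  exact ⟨_, _, h.trans h'⟩

theorem Reachable.add_right (h : Reachable S T) (U : Multiset (Triple K)) :
    Reachable (S + U) (T + U) := by
  obtain ⟨f, r, h⟩ := h
  exact ⟨f, r, h.add_right U⟩

theorem Reachable.add (h : Reachable S T) (h' : Reachable S' T') :
    Reachable (S + S') (T + T') := by
  refine (h.add_right S').trans ?_
  rw [add_comm T, add_comm T]
  exact h'.add_right T

theorem Reachable.sum {ι : Type*} (s : Finset ι) {F G : ι → Multiset (Triple K)}
    (h : ∀ i, Reachable (F i) (G i)) : Reachable (∑ i ∈ s, F i) (∑ i ∈ s, G i) :=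
  Finset.sum_hom_rel (.refl 0) fun i _ _ h' => (h i).add h'

theorem reachable_flip (u₁ u₂ v w₁ w₂ : K[X]) (l : K) :
    Reachable {(u₁ + l • u₂, v, w₁), (u₂, v, w₂)} {(u₁, v, w₁), (u₂, v, w₂ + l • w₁)} :=
  IsFlip.reachable ⟨0, l, .inr <| .inl ⟨v, u₁ + l • u₂, w₁, u₂, w₂, rfl, by
    rw [add_sub_cancel_right]; rfl⟩⟩

theorem reachable_reduction (u v₁ v₂ w : K[X]) :
    Reachable {(u, v₁, w), (u, v₂, w)} {(u, v₁ + v₂, w)} :=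
  IsReduction.reachable ⟨0, .inr <| .inl ⟨u, v₁, v₂, w, rfl, rfl⟩⟩

theorem reachable_merge {ι : Type*} {s : Finset ι} (hs : s.Nonempty) (u w : K[X])
    (v : ι → K[X]) : Reachable (∑ i ∈ s, {(u, v i, w)}) {(u, ∑ i ∈ s, v i, w)} := by
  induction hs using Finset.Nonempty.cons_induction with
  | singleton a => simp only [Finset.sum_singleton]; rfl
  | cons a s ha _ ih =>
    rw [Finset.sum_cons, Finset.sum_cons]
    exact ((Reachable.refl _).add ih).trans (reachable_reduction u (v a) _ w)

end Reachable

section Column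

open Matrix

variable {ι κ σ : Type*} [Fintype ι] [Fintype κ]

theorem reachable_of_diagonal (d : ι → K) (v : K[X]) (e f : ι → K[X]) :
    Reachable (∑ i, {(d i • e i, v, f i)}) (∑ i, {(e i, v, d i • f i)}) :=
  .sum _ fun i => ReEq.reachable <| by simp [ReEq, tensorOf, smul_tmul]

theorem reachable_of_transvection [DecidableEq ι] {i j : ι} (hij : i ≠ j) (c : K) (v : K[X])
    (e f : ι → K[X]) :
    Reachable (∑ a, {(∑ b, transvection i j c a b • e b, v, f a)})
      (∑ b, {(e b, v, ∑ a, transvection i j c a b • f a)}) := by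
  have hrow (a : ι) :
      ∑ b, transvection i j c a b • e b = e a + if a = i then c • e j else 0 := by
    simp [transvection, add_smul, Finset.sum_add_distrib, one_apply, single_apply, ite_and, eq_comm]
  have hcol (b : ι) :
      ∑ a, transvection i j c a b • f a = f b + if b = j then c • f i else 0 := by
    simp [transvection, add_smul, Finset.sum_add_distrib, one_apply, single_apply, ite_and, eq_comm]
  have hsplit (F : ι → Multiset (Triple K)) :
      ∑ a, F a = F i + F j + ∑ a ∈ {i, j}ᶜ, F a := by
    rw [← Finset.sum_pair hij, Finset.sum_add_sum_compl]
  have hrest : ∑ a ∈ {i, j}ᶜ, {(∑ b, transvection i j c a b • e b, v, f a)} =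
      ∑ b ∈ {i, j}ᶜ, ({(e b, v, ∑ a, transvection i j c a b • f a)} : Multiset (Triple K)) := by
    refine Finset.sum_congr rfl fun a ha => ?_
    obtain ⟨hi, hj⟩ : a ≠ i ∧ a ≠ j := by simpa using ha
    simp [hrow, hcol, hi, hj]
  rw [hsplit, hsplit, hrest]
  refine .add_right ?_ _
  simpa [hrow, hcol, hij, hij.symm] using reachable_flip (e i) (e j) v (f i) (f j) c

theorem reachable_of_square_matrix (M : Matrix ι ι K) (v : K[X]) (e f : ι → K[X]) :
    Reachable (∑ a, {(∑ b, M a b • e b, v, f a)}) (∑ b, {(e b, v, ∑ a, M a b • f a)}) := by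
  classical
  induction M using diagonal_transvection_induction generalizing e f with
  | hdiag d => simpa [diagonal_apply] using reachable_of_diagonal d v e f
  | htransvec t => exact reachable_of_transvection t.hij t.c v e f
  | hmul A B hA hB =>
    have hcol (b : ι) : ∑ a, (A * B) a b • f a = ∑ i, B i b • ∑ a, A a i • f a := by
      simpa [← transpose_mul] using sum_mul_smul Bᵀ Aᵀ f b
    simpa only [sum_mul_smul, hcol] using
      (hA (fun i => ∑ b, B i b • e b) f).trans (hB e fun i => ∑ a, A a i • f a)

theorem reachable_of_matrix (h : Fintype.card ι = Fintype.card κ) (M : Matrix ι κ K) (v : K[X])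
    (e : κ → K[X]) (f : ι → K[X]) :
    Reachable (∑ a, {(∑ b, M a b • e b, v, f a)}) (∑ b, {(e b, v, ∑ a, M a b • f a)}) := by
  obtain ⟨φ⟩ := Fintype.card_eq.1 h
  simpa [← φ.sum_comp] using reachable_of_square_matrix (M.submatrix id φ) v (e ∘ φ) f

variable [Fintype σ]

theorem exists_reachable_of_mul_eq_one [DecidableEq σ] {A : Matrix σ ι K} {B : Matrix ι σ K}
    (h : A * B = 1) (v : K[X]) (e f : ι → K[X]) :
    ∃ R, Reachable (∑ i, {(e i, v, f i)})
        (∑ s, {(∑ i, A s i • e i, v, ∑ i, B i s • f i)} + R) ∧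
      Multiset.card R + Fintype.card σ = Fintype.card ι := by
  classical
  obtain ⟨m, C, D, hm, hone⟩ := exists_mul_add_mul_eq_one h
  refine ⟨∑ t, {(∑ i, D t i • e i, v, ∑ i, C i t • f i)}, ?_, by simpa using hm⟩
  have he (i : ι) : ∑ b, fromCols B C i b • ∑ k, fromRows A D b k • e k = e i := by
    rw [← sum_mul_smul, fromCols_mul_fromRows, hone]
    simp [one_apply]
  have hreach := reachable_of_matrix (by simp [← hm, add_comm]) (fromCols B C) v
    (fun b => ∑ k, fromRows A D b k • e k) f
  simpa [he] using hreach

end Column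

section MergeScheme

open Finset

variable {σ : Type*} {N m : ℕ}

variable (K) in
/-- The standard representation restricted to the block of rows `a_k, …, a_{k+N-1}`, listed column
by column, where column `j` consists of the triples with second component `b_j`. -/
noncomputable def shiftedRep (k N m : ℕ) : Multiset (Triple K) :=
  ∑ j : Fin (m + 1), ∑ i : Fin N, {(X ^ (k + i), X ^ (j : ℕ), X ^ (k + i + j))}

theorem stdRep_eq_shiftedRep (n m : ℕ) : stdRep K n m = shiftedRep K 0 (n + 1) m := by
  simp only [stdRep, shiftedRep, zero_add]
  rw [← Multiset.sum_map_singleton (Multiset.map _ _), Multiset.map_map]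
  change ∑ p ∈ range (n + 1) ×ˢ range (m + 1), _ = _
  rw [sum_product_right, sum_range]
  simp [sum_range]

theorem shiftedRep_add (k N₁ N₂ m : ℕ) :
    shiftedRep K k (N₁ + N₂) m = shiftedRep K k N₁ m + shiftedRep K (k + N₁) N₂ m := by
  simp [shiftedRep, Fin.sum_univ_add, sum_add_distrib, add_assoc]

/-- The exponent `i + j` of the product of row `i` and column `j`, as an index into the `N + m`
coefficients of a third component. -/
def addIndex (i : Fin N) (j : Fin (m + 1)) : Fin (N + m) :=
  ⟨i + j, by omega⟩

/-- A family of products, indexed by `σ`, to be split off a block of `N` rows: product `s` has first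
component `∑ i, u s i • a_{k+i}` and third component `∑ d, w s d • c_{k+d}`, is split off every
column `j ∈ J s`, and its copies are then merged into a single triple. The field `support` places
the third component in the span of those of column `j`; `dual` lets all products of a column be
split off simultaneously. -/
structure IsMergeScheme {R : Type*} [Semiring R] [DecidableEq σ] (J : σ → Finset (Fin (m + 1)))
    (u : σ → Fin N → R) (w : σ → Fin (N + m) → R) : Prop where
  nonempty : ∀ s, (J s).Nonempty
  support : ∀ s, ∀ j ∈ J s, ∀ d, w s d ≠ 0 → ∃ i, addIndex i j = d
  dual : ∀ s t, ∀ j ∈ J s ∩ J t, ∑ i, u s i * w t (addIndex i j) = if s = t then 1 else 0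

namespace IsMergeScheme

variable [DecidableEq σ] {J : σ → Finset (Fin (m + 1))}

theorem map {R R' : Type*} [Semiring R] [Semiring R'] {u : σ → Fin N → R}
    {w : σ → Fin (N + m) → R} (h : IsMergeScheme J u w) (φ : R →+* R') :
    IsMergeScheme J (fun s i => φ (u s i)) (fun s d => φ (w s d)) where
  nonempty := h.nonempty
  support s j hj d hd := h.support s j hj d fun h0 => hd (by simp [h0])
  dual s t j hj := by simpa [apply_ite φ] using congrArg φ (h.dual s t j hj)

variable {u : σ → Fin N → K} {w : σ → Fin (N + m) → K}

theorem sum_addIndex_smul (h : IsMergeScheme J u w) {s : σ} {j : Fin (m + 1)} (hj : j ∈ J s)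
    (k : ℕ) : ∑ i : Fin N, w s (addIndex i j) • (X : K[X]) ^ (k + i + j) =
      ∑ d, w s d • X ^ (k + d) := by
  refine Fintype.sum_of_injective (addIndex · j) (fun i i' hi => ?_) _ _ (fun d hd => ?_)
    fun i => by simp [addIndex, add_assoc]
  · simpa [addIndex, Fin.ext_iff] using hi
  · rw [not_not.1 fun h0 => hd (h.support s j hj d h0), zero_smul]

variable [Fintype σ]

theorem exists_reachable_column (h : IsMergeScheme J u w) (k : ℕ) (j : Fin (m + 1)) :
    ∃ R, Reachable (K := K) (∑ i : Fin N, {(X ^ (k + i : ℕ), X ^ (j : ℕ), X ^ (k + i + j : ℕ))})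
        (∑ s with j ∈ J s,
          {(∑ i, u s i • X ^ (k + i : ℕ), X ^ (j : ℕ), ∑ d, w s d • X ^ (k + d : ℕ))} + R) ∧
      Multiset.card R + #{s | j ∈ J s} = N := by
  let A : Matrix {s // j ∈ J s} (Fin N) K := .of fun s => u s
  let B : Matrix (Fin N) {s // j ∈ J s} K := .of fun i s => w s (addIndex i j)
  have hone : A * B = 1 := by
    ext s t
    have hdual := h.dual s t j (mem_inter.2 ⟨s.2, t.2⟩)
    simp [A, B, Matrix.mul_apply, Matrix.one_apply, hdual, Subtype.ext_iff]
  obtain ⟨R, hR, hcard⟩ := exists_reachable_of_mul_eq_one hone (X ^ (j : ℕ))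
    (fun i => X ^ (k + i : ℕ)) (fun i => X ^ (k + i + j : ℕ))
  refine ⟨R, ?_, by simpa [Fintype.card_subtype] using hcard⟩
  have hw (s : {s // j ∈ J s}) := h.sum_addIndex_smul s.2 k
  rw [sum_subtype (p := (j ∈ J ·)) _ (by simp)]
  simpa [A, B, hw] using hR

theorem exists_reachable (h : IsMergeScheme J u w) (k : ℕ) :
    ∃ R, Reachable (shiftedRep K k N m) R ∧
      Multiset.card R + ∑ s, #(J s) = (m + 1) * N + Fintype.card σ := by
  choose R hR hcard using h.exists_reachable_column k
  let U (s : σ) : K[X] := ∑ i : Fin N, u s i • X ^ (k + i)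
  let W (s : σ) : K[X] := ∑ d : Fin (N + m), w s d • X ^ (k + d)
  refine ⟨∑ s, {(U s, ∑ j ∈ J s, X ^ (j : ℕ), W s)} + ∑ j, R j, ?_, ?_⟩
  · have hmerge : Reachable (∑ s, ∑ j ∈ J s, {(U s, X ^ (j : ℕ), W s)})
        (∑ s, {(U s, ∑ j ∈ J s, X ^ (j : ℕ), W s)}) :=
      .sum _ fun s => reachable_merge (h.nonempty s) _ _ _
    refine (Reachable.sum _ hR).trans ?_
    rw [sum_add_distrib, sum_comm' (t' := .univ) (s' := J) (by simp)]
    exact hmerge.add_right _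
  · have hcount : ∑ s, #(J s) = ∑ j, #{s | j ∈ J s} := by
      simp only [card_eq_sum_ones]
      exact sum_comm' (by simp)
    have hsum : ∑ j, (Multiset.card (R j) + #{s | j ∈ J s}) = (m + 1) * N := by
      simp [hcard]
    rw [sum_add_distrib] at hsum
    simp only [Multiset.card_add, Multiset.card_sum, Multiset.card_singleton, hcount, sum_const,
      card_univ, smul_eq_mul, mul_one]
    omega

end IsMergeScheme

variable (K) in
/-- Length `c` is reachable from any block of `N` rows with columns `b_0, …, b_m`. The offset `k` of
the block is arbitrary so that blocks can be concatenated. -/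
def IsReachableLength (N m c : ℕ) : Prop :=
  ∀ k, ∃ R, Reachable (shiftedRep K k N m) R ∧ Multiset.card R = c

theorem IsReachableLength.add {N₁ N₂ c₁ c₂ : ℕ} (h₁ : IsReachableLength K N₁ m c₁)
    (h₂ : IsReachableLength K N₂ m c₂) : IsReachableLength K (N₁ + N₂) m (c₁ + c₂) := by
  intro k
  obtain ⟨R₁, hR₁, rfl⟩ := h₁ k
  obtain ⟨R₂, hR₂, rfl⟩ := h₂ (k + N₁)
  exact ⟨R₁ + R₂, by rw [shiftedRep_add]; exact hR₁.add hR₂, Multiset.card_add R₁ R₂⟩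

theorem IsMergeScheme.isReachableLength [Fintype σ] [DecidableEq σ]
    {J : σ → Finset (Fin (m + 1))} {u : σ → Fin N → ℤ} {w : σ → Fin (N + m) → ℤ}
    (h : IsMergeScheme J u w) {c : ℕ} (hc : c + ∑ s, #(J s) = (m + 1) * N + Fintype.card σ) :
    IsReachableLength K N m c := by
  intro k
  obtain ⟨R, hR, hcard⟩ := (h.map (Int.castRingHom K)).exists_reachable k
  exact ⟨R, hR, by omega⟩

end MergeScheme

-- Karatsuba: the products are `(a_i + a_j) ⊗ (b_i + b_j) ⊗ c_{i+j}` for `i < j`.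
theorem isReachableLength_three : IsReachableLength K 3 2 6 :=
  IsMergeScheme.isReachableLength
    (J := ![{0, 1}, {0, 2}, {1, 2}])
    (u := ![![1, 1, 0],
            ![1, 0, 1],
            ![0, 1, 1]])
    (w := ![![0, 1, 0, 0, 0],
            ![0, 0, 1, 0, 0],
            ![0, 0, 0, 1, 0]])
    ⟨by decide, by decide +kernel, by decide +kernel⟩ (by decide)

-- In the next three schemes the first product is evaluation at `x = 1`. All other `w s` are
-- multiples of `1 - x`, hence orthogonal to its `u s = (1, …, 1)`. The schemes for six and eight
-- rows were found by computer search.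
theorem isReachableLength_six : IsReachableLength K 6 2 11 :=
  IsMergeScheme.isReachableLength
    (J := ![{0, 1, 2}, {0, 1}, {0, 1}, {0, 2}, {0, 2}, {1, 2}])
    (u := ![![1, 1, 1, 1, 1, 1],
            ![1, 1, 2, 1, 1, 0],
            ![2, 1, 0, 0, 0, 0],
            ![0, 1, 0, 1, 0, 1],
            ![3, 1, 1, 0, 0, 0],
            ![2, 1, 1, 0, 1, 1]])
    (w := ![![0, 0, 0, -1, 1, 1, 0, 0],
            ![0, 0, 0, 1, 0, -1, 0, 0],
            ![0, 1, -1, 0, 1, -1, 0, 0],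
            ![0, 0, 0, 1, -1, 0, 0, 0],
            ![0, 0, 1, -1, -1, 1, 0, 0],
            ![0, 0, 0, 1, -1, -1, 1, 0]])
    ⟨by decide, by decide +kernel, by decide +kernel⟩ (by decide)

-- The products after the first have the `w s` of two Karatsuba blocks, multiplied by `1 - x`.
theorem isReachableLength_seven : IsReachableLength K 7 2 13 :=
  IsMergeScheme.isReachableLength
    (J := ![{0, 1, 2}, {0, 1}, {0, 2}, {1, 2}, {0, 1}, {0, 2}, {1, 2}])
    (u := ![![1, 1, 1, 1, 1, 1, 1],
            ![2, 1, 0, 0, 0, 0, 0],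
            ![2, 1, 1, 0, 0, 0, 0],
            ![1, 1, 0, -1, -1, -1, -1],
            ![1, 1, 1, 1, 0, -1, -1],
            ![0, 0, 0, 0, -1, -1, -2],
            ![0, 0, 0, 0, 0, -1, -2]])
    (w := ![![0, 0, 0, 1, -1, 1, 0, 0, 0],
            ![0, 1, -1, 0, 0, 0, 0, 0, 0],
            ![0, 0, 1, -1, 0, 0, 0, 0, 0],
            ![0, 0, 0, 1, -1, 0, 0, 0, 0],
            ![0, 0, 0, 0, 1, -1, 0, 0, 0],
            ![0, 0, 0, 0, 0, 1, -1, 0, 0],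
            ![0, 0, 0, 0, 0, 0, 1, -1, 0]])
    ⟨by decide, by decide +kernel, by decide +kernel⟩ (by decide)

theorem isReachableLength_eight : IsReachableLength K 8 2 15 :=
  IsMergeScheme.isReachableLength
    (J := ![{0, 1, 2}, {0, 1}, {0, 1}, {0, 2}, {0, 2}, {1, 2}, {1, 2}, {1, 2}])
    (u := ![![1, 1, 1, 1, 1, 1, 1, 1],
            ![1, 1, 1, 0, 1, 1, 1, 0],
            ![1, 0, 0, 0, 0, 0, 1, 1],
            ![0, 1, 0, 1, 0, 1, 0, 1],
            ![1, 0, 0, 0, 1, 1, 1, 2],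
            ![0, 0, 0, 0, 0, 0, 1, 2],
            ![1, 0, 1, 1, 2, 1, 1, 0],
            ![1, 0, 0, 0, 0, -1, -1, -1]])
    (w := ![![0, 0, 0, 1, 1, -1, 0, 0, 0, 0],
            ![0, 0, 1, -1, -1, 1, 0, 0, 0, 0],
            ![0, 1, -1, 0, 0, -1, 1, 0, 0, 0],
            ![0, 0, 0, 0, -1, 1, 0, 0, 0, 0],
            ![0, 0, 1, -1, 0, 0, -1, 1, 0, 0],
            ![0, 0, 0, 0, -1, 1, 0, -1, 1, 0],
            ![0, 0, 0, -1, 0, 1, 0, 0, 0, 0],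
            ![0, 0, 1, -1, 0, 1, -1, 0, 0, 0]])
    ⟨by decide, by decide +kernel, by decide +kernel⟩ (by decide)

theorem isReachableLength_add_six : ∀ n, IsReachableLength K (n + 6) 2 (2 * n + 11)
  | 0 => isReachableLength_six
  | 1 => isReachableLength_seven
  | 2 => isReachableLength_eight
  | n + 3 => by
    convert (isReachableLength_add_six n).add isReachableLength_three using 1
    ring

end FlipGraph

/-- Let `K` be an arbitrary field and `n ≥ 5`.  In the flip graph of the
polynomial multiplication tensor `T_{n,2}` there is a path (consisting of flips and
reductions) from the standard representation to a representation of length `2n+1`. -/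
theorem path_to_short_rep_deg_two (K : Type) [Field K] (n : ℕ) (hn : 5 ≤ n) :
    ∃ (R : Multiset (Triple K)) (f r : ℕ),
      Path K (stdRep K n 2) R f r ∧ Multiset.card R = 2 * n + 1 := by
  obtain ⟨m, rfl⟩ := Nat.exists_eq_add_of_le' hn
  obtain ⟨R, ⟨f, r, hR⟩, hcard⟩ := isReachableLength_add_six (K := K) m 0
  rw [stdRep_eq_shiftedRep]
  exact ⟨R, f, r, hR, by omega⟩
end

section
/- Let K be an arbitrary field and n ≥ 5. Then the rank of the polynomial multiplication tensor T_{n,2} over K is at most 2n+1, i.e. there exist u_ℓ ∈ K[x] of degree ≤ n, v_ℓ ∈ K[x] of degree ≤ 2, w_ℓ ∈ K[x] of degree ≤ n+2, ℓ = 1, …, 2n+1, with T_{n,2} = ∑_ℓ u_ℓ ⊗ v_ℓ ⊗ w_ℓ. -/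
/-!
Splitting the first factor into its part of degree at most `n` and the multiple of `X ^ (n + 1)`
above it writes `T_{n+k+1,m}` as the sum of `T_{n,m}` and a copy of `T_{k,m}` shifted in the first
and the third factor. Karatsuba's identity represents `T_{2,2}` with six terms, so that a step of
three in `n` costs six terms, and the bound `2 n + 1` propagates from `n = 5, 6, 7`. These three
tensors have representations with coefficients in `{-1, 0, 1}`; being solutions of the Brent
equations over the integers, they are valid over every commutative ring.
-/

open Polynomial TensorProduct

section TensorRank

variable {R M N P M' N' P' : Type*} [CommSemiring R]
  [AddCommMonoid M] [AddCommMonoid N] [AddCommMonoid P]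
  [AddCommMonoid M'] [AddCommMonoid N'] [AddCommMonoid P']
  [Module R M] [Module R N] [Module R P] [Module R M'] [Module R N'] [Module R P']
  {A : Submodule R M} {B : Submodule R N} {C : Submodule R P}
  {A' : Submodule R M'} {B' : Submodule R N'} {C' : Submodule R P'}
  {T T' : M ⊗[R] (N ⊗[R] P)} {r s : ℕ}

/-- The tensor `T` has rank at most `r` relative to the submodules `A`, `B`, `C`: it is a sum of
`r` pure tensors with factors in `A`, `B`, `C`. Terms may vanish, so the length is exactly `r`. -/
def TensorRankLE (A : Submodule R M) (B : Submodule R N) (C : Submodule R P)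
    (T : M ⊗[R] (N ⊗[R] P)) (r : ℕ) : Prop :=
  ∃ (u : Fin r → M) (v : Fin r → N) (w : Fin r → P),
    (∀ l, u l ∈ A) ∧ (∀ l, v l ∈ B) ∧ (∀ l, w l ∈ C) ∧ ∑ l, u l ⊗ₜ[R] (v l ⊗ₜ[R] w l) = T

namespace TensorRankLE

theorem mono {A₁ : Submodule R M} {B₁ : Submodule R N} {C₁ : Submodule R P}
    (h : TensorRankLE A B C T r) (hA : A ≤ A₁) (hB : B ≤ B₁) (hC : C ≤ C₁) :
    TensorRankLE A₁ B₁ C₁ T r := by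
  obtain ⟨u, v, w, hu, hv, hw, hT⟩ := h
  exact ⟨u, v, w, fun l ↦ hA (hu l), fun l ↦ hB (hv l), fun l ↦ hC (hw l), hT⟩

theorem map {f : M →ₗ[R] M'} {g : N →ₗ[R] N'} {h : P →ₗ[R] P'} (hT : TensorRankLE A B C T r)
    (hf : A ≤ A'.comap f) (hg : B ≤ B'.comap g) (hh : C ≤ C'.comap h) :
    TensorRankLE A' B' C' (TensorProduct.map f (TensorProduct.map g h) T) r := by
  obtain ⟨u, v, w, hu, hv, hw, rfl⟩ := hT
  refine ⟨f ∘ u, g ∘ v, h ∘ w, fun l ↦ hf (hu l), fun l ↦ hg (hv l), fun l ↦ hh (hw l), ?_⟩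
  simp only [map_sum, TensorProduct.map_tmul, Function.comp_apply]

theorem add (hT : TensorRankLE A B C T r) (hT' : TensorRankLE A B C T' s) :
    TensorRankLE A B C (T + T') (r + s) := by
  obtain ⟨u, v, w, hu, hv, hw, rfl⟩ := hT
  obtain ⟨u', v', w', hu', hv', hw', rfl⟩ := hT'
  refine ⟨Fin.append u u', Fin.append v v', Fin.append w w', ?_, ?_, ?_, ?_⟩
  · exact Fin.addCases (by simpa using hu) (by simpa using hu')
  · exact Fin.addCases (by simpa using hv) (by simpa using hv')
  · exact Fin.addCases (by simpa using hw) (by simpa using hw')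
  · simp only [Fin.sum_univ_add, Fin.append_left, Fin.append_right]

theorem of_coeff {ι κ μ : Type*} [Fintype ι] [Fintype κ] [Fintype μ] {a : ι → M} {b : κ → N}
    {c : μ → P} (ha : ∀ i, a i ∈ A) (hb : ∀ j, b j ∈ B) (hc : ∀ k, c k ∈ C)
    (U : Matrix (Fin r) ι R) (V : Matrix (Fin r) κ R) (W : Matrix (Fin r) μ R) :
    TensorRankLE A B C
      (∑ i, ∑ j, ∑ k, (∑ l, U l i * V l j * W l k) • a i ⊗ₜ[R] (b j ⊗ₜ[R] c k)) r := by
  refine ⟨fun l ↦ ∑ i, U l i • a i, fun l ↦ ∑ j, V l j • b j, fun l ↦ ∑ k, W l k • c k,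
    fun l ↦ A.sum_smul_mem _ fun i _ ↦ ha i, fun l ↦ B.sum_smul_mem _ fun j _ ↦ hb j,
    fun l ↦ C.sum_smul_mem _ fun k _ ↦ hc k, ?_⟩
  have hexpand (l : Fin r) :
      (∑ i, U l i • a i) ⊗ₜ[R] ((∑ j, V l j • b j) ⊗ₜ[R] (∑ k, W l k • c k)) =
        ∑ i, ∑ j, ∑ k, (U l i * V l j * W l k) • a i ⊗ₜ[R] (b j ⊗ₜ[R] c k) := by
    simp_rw [TensorProduct.sum_tmul, TensorProduct.tmul_sum]
    simp only [TensorProduct.tmul_smul, ← TensorProduct.smul_tmul', smul_smul, mul_comm,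
      mul_left_comm]
  calc _ = ∑ l, ∑ i, ∑ j, ∑ k, (U l i * V l j * W l k) • a i ⊗ₜ[R] (b j ⊗ₜ[R] c k) :=
        Finset.sum_congr rfl fun l _ ↦ hexpand l
    _ = _ := by simp only [Finset.sum_smul, Finset.sum_comm (γ := Fin r)]

end TensorRankLE

end TensorRank

section MulTensor

section CommSemiring

variable (R : Type*) [CommSemiring R]

/-- The tensor `T_{n,m}` of the multiplication of polynomials of degree at most `n` by polynomials
of degree at most `m`. -/
noncomputable def mulTensor (n m : ℕ) : R[X] ⊗[R] (R[X] ⊗[R] R[X]) :=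
  ∑ i ∈ Finset.range (n + 1), ∑ j ∈ Finset.range (m + 1),
    ((X : R[X]) ^ i) ⊗ₜ[R] (((X : R[X]) ^ j) ⊗ₜ[R] ((X : R[X]) ^ (i + j)))

/-- The rank of `T_{n,m}` is at most `r`, by a representation whose factors have degrees at most
`n`, `m` and `n + m`. -/
def MulTensorRankLE (n m r : ℕ) : Prop :=
  TensorRankLE (degreeLE R n) (degreeLE R m) (degreeLE R (n + m : ℕ)) (mulTensor R n m) r

theorem degreeLE_le_comap_mulLeft_X_pow {k d e : ℕ} (h : k + d ≤ e) :
    degreeLE R d ≤ (degreeLE R e).comap (LinearMap.mulLeft R (X ^ k)) := by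
  intro p hp
  rw [mem_degreeLE] at hp
  rw [Submodule.mem_comap, LinearMap.mulLeft_apply, mem_degreeLE]
  calc (X ^ k * p).degree ≤ (X ^ k : R[X]).degree + p.degree := degree_mul_le _ _
    _ ≤ k + d := add_le_add (degree_X_pow_le k) hp
    _ ≤ e := by exact_mod_cast h

theorem mulTensor_add_add_one (n k m : ℕ) :
    mulTensor R (n + k + 1) m = mulTensor R n m +
      TensorProduct.map (LinearMap.mulLeft R (X ^ (n + 1)))
        (TensorProduct.map LinearMap.id (LinearMap.mulLeft R (X ^ (n + 1)))) (mulTensor R k m) := by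
  simp only [mulTensor, map_sum, TensorProduct.map_tmul, LinearMap.mulLeft_apply,
    LinearMap.id_apply, ← pow_add]
  rw [show n + k + 1 + 1 = (n + 1) + (k + 1) by ring, Finset.sum_range_add]
  simp only [add_assoc]

variable {R}

theorem MulTensorRankLE.add_add_one {n k m r s : ℕ} (hn : MulTensorRankLE R n m r)
    (hk : MulTensorRankLE R k m s) : MulTensorRankLE R (n + k + 1) m (r + s) := by
  have hlow : TensorRankLE (degreeLE R ↑(n + k + 1)) (degreeLE R m) (degreeLE R ↑(n + k + 1 + m))
      (mulTensor R n m) r :=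
    hn.mono (degreeLE_mono (by exact_mod_cast (by lia : n ≤ n + k + 1))) le_rfl
      (degreeLE_mono (by exact_mod_cast (by lia : n + m ≤ n + k + 1 + m)))
  have hhigh := hk.map (degreeLE_le_comap_mulLeft_X_pow R (by lia : n + 1 + k ≤ n + k + 1))
    (Submodule.comap_id _).ge
    (degreeLE_le_comap_mulLeft_X_pow R (by lia : n + 1 + (k + m) ≤ n + k + 1 + m))
  rw [MulTensorRankLE, mulTensor_add_add_one]
  exact hlow.add hhigh

theorem mulTensor_eq_sum_ite (n m : ℕ) :
    mulTensor R n m = ∑ i : Fin (n + 1), ∑ j : Fin (m + 1), ∑ k : Fin (n + m + 1),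
      (if (i + j : ℕ) = k then (1 : R) else 0) •
        ((X : R[X]) ^ (i : ℕ)) ⊗ₜ[R] (((X : R[X]) ^ (j : ℕ)) ⊗ₜ[R] ((X : R[X]) ^ (k : ℕ))) := by
  simp only [mulTensor, Finset.sum_range]
  refine Finset.sum_congr rfl fun i _ ↦ Finset.sum_congr rfl fun j _ ↦ ?_
  rw [Finset.sum_eq_single (⟨i + j, by lia⟩ : Fin (n + m + 1))]
  · simp
  · intro k _ hk
    rw [if_neg fun h ↦ hk (Fin.ext h.symm), zero_smul]
  · simp

end CommSemiring

variable (R : Type*) [CommRing R]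

/-- Row `l` of `U`, `V` and `W` lists the coefficients of the factors of the `l`-th term. The
hypothesis `h` is the system of Brent equations. -/
theorem MulTensorRankLE.of_intCoeff {n m r : ℕ} (U : Matrix (Fin r) (Fin (n + 1)) ℤ)
    (V : Matrix (Fin r) (Fin (m + 1)) ℤ) (W : Matrix (Fin r) (Fin (n + m + 1)) ℤ)
    (h : ∀ i j k, ∑ l, U l i * V l j * W l k = if (i + j : ℕ) = k then 1 else 0) :
    MulTensorRankLE R n m r := by
  have hX {d : ℕ} (i : Fin (d + 1)) : (X : R[X]) ^ (i : ℕ) ∈ degreeLE R d :=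
    mem_degreeLE.2 ((degree_X_pow_le _).trans (by exact_mod_cast i.is_le))
  have hcast (i j k) : ∑ l, (U l i : R) * V l j * W l k = if (i + j : ℕ) = k then 1 else 0 := by
    exact_mod_cast congrArg (Int.cast : ℤ → R) (h i j k)
  rw [MulTensorRankLE, mulTensor_eq_sum_ite]
  simp only [← hcast]
  exact TensorRankLE.of_coeff hX hX hX (U.map Int.cast) (V.map Int.cast) (W.map Int.cast)

/-- Karatsuba: `a_i b_j + a_j b_i = (a_i + a_j) (b_i + b_j) - a_i b_i - a_j b_j`. -/
theorem mulTensorRankLE_two_two : MulTensorRankLE R 2 2 6 :=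
  .of_intCoeff R
    !![ 1,  0,  0;
        0,  1,  0;
        0,  0,  1;
        1,  1,  0;
        1,  0,  1;
        0,  1,  1]
    !![ 1,  0,  0;
        0,  1,  0;
        0,  0,  1;
        1,  1,  0;
        1,  0,  1;
        0,  1,  1]
    !![ 1, -1, -1,  0,  0;
        0, -1,  1, -1,  0;
        0,  0, -1, -1,  1;
        0,  1,  0,  0,  0;
        0,  0,  1,  0,  0;
        0,  0,  0,  1,  0]
    (by decide +kernel)

theorem mulTensorRankLE_five_two : MulTensorRankLE R 5 2 11 :=
  .of_intCoeff R
    !![ 1,  1, -1, -1,  1,  1;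
        1,  1,  0, -1,  1,  0;
        1,  0, -1,  0,  1,  0;
        0,  0,  0,  1, -1, -1;
        1,  0,  0, -1,  1,  0;
        0,  0,  0,  1, -1,  0;
        0,  1, -1,  0,  0,  1;
        0,  0,  0,  0,  1,  0;
        0,  1,  0, -1,  1,  0;
        0,  1,  0, -1,  0,  1;
        0,  0,  0,  0,  0,  1]
    !![ 1,  1, -1;
        1,  1,  0;
        1,  0, -1;
        1,  0, -1;
        1,  0,  0;
        1,  0,  0;
        0,  1, -1;
        0,  1,  1;
        0,  1,  0;
        0,  1,  0;
        0,  0,  1]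
    !![ 0,  0, -1, -1, -1,  0,  0,  0;
        0,  1,  1,  1,  1,  0,  0,  0;
        0,  0,  0,  1,  1,  0,  0,  0;
        0,  0, -1, -1, -1, -1,  0,  0;
        1, -1,  0, -1, -1,  0,  0,  0;
        1,  0,  1,  1,  0,  1,  0,  0;
        0,  0,  1,  0,  1,  0,  0,  0;
        0,  0,  0,  1,  1,  1,  1,  0;
        0, -1,  0, -1, -1,  0, -1,  0;
        0,  0,  0,  1,  0,  0,  1,  0;
        0,  0,  1,  0,  1,  1,  0,  1]
    (by decide +kernel)

theorem mulTensorRankLE_six_two : MulTensorRankLE R 6 2 13 :=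
  .of_intCoeff R
    !![ 1, -1, -1,  1,  1, -1, -1;
        1, -1,  0,  0,  0,  0,  0;
        0,  1,  1, -1,  0,  1,  1;
        1,  1,  0,  0,  0,  1,  1;
        1,  0, -1,  0,  1,  0, -1;
        1,  0,  0,  0,  0,  0,  0;
        0,  1,  1,  0,  0,  1,  1;
        1,  0,  0,  1,  1,  0,  0;
        0,  1,  0,  0,  0,  0,  1;
        0,  1,  0,  1,  0, -1,  0;
        0,  1,  0,  0,  0,  0,  0;
        0,  1,  0,  0,  0,  1,  1;
        0,  1,  0,  0,  0,  1,  0]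
    !![ 1, -1, -1;
        1, -1,  0;
        1, -1,  0;
        1,  0, -1;
        1,  0, -1;
        1,  0,  0;
        1,  0,  0;
        0,  1,  1;
        0,  1, -1;
        0,  1,  0;
        0,  1,  0;
        0,  0,  1;
        0,  0,  1]
    !![ 0,  0,  0,  0,  1, -1,  1,  0,  0;
        0, -1,  0,  0,  0,  1,  0,  0,  0;
        0,  0,  0, -1,  1, -1,  1,  0,  0;
        0,  0, -1,  0,  0,  0,  1,  0,  0;
        0,  0,  0,  0,  0,  1, -1,  0,  0;
        1,  1,  1,  0, -1, -1, -1,  0,  0;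
        0,  0,  1,  1,  0,  1, -1,  0,  0;
        0,  0,  0,  0,  1,  0,  1,  0,  0;
        0,  0,  0, -1,  0,  0,  0,  1,  0;
        0,  0,  0,  1,  0,  0, -1,  0,  0;
        0,  1,  1, -1,  0, -1,  1, -1,  0;
        0,  0, -1, -1, -1,  0,  1,  1,  1;
        0,  0,  0,  1,  0,  1, -1,  0, -1]
    (by decide +kernel)

theorem mulTensorRankLE_seven_two : MulTensorRankLE R 7 2 15 :=
  .of_intCoeff R
    !![ 1,  1,  1,  1,  0,  1,  1,  0;
        0,  0,  0,  0,  1,  0,  0,  1;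
        1, -1,  0,  0,  0, -1,  0,  0;
        0,  0,  0,  0,  1, -1, -1,  1;
        1,  0,  1,  0,  0,  1,  1,  0;
        0,  0,  0,  0,  0,  1,  0,  1;
        1,  0,  0,  0,  0, -1,  0,  0;
        0,  0,  0,  0,  0,  1,  0,  0;
        0,  0,  0,  1,  0,  0,  1,  1;
        0,  0,  0,  1,  0,  0,  0,  0;
        0,  1,  0,  1, -1,  1,  1,  0;
        0,  1,  0,  0,  0,  1,  1,  0;
        0,  1,  0,  0,  0,  1,  0,  0;
        0,  0,  1,  0, -1,  1,  1,  0;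
        0,  0,  0,  0,  0,  0,  0,  1]
    !![ 1,  1,  1;
        1,  1,  1;
        1, -1,  0;
        1,  1,  0;
        1,  0,  1;
        1,  0,  1;
        1,  0,  0;
        1,  0,  0;
        0,  1,  1;
        0,  1,  1;
        0,  1,  0;
        0,  1,  0;
        0,  1,  0;
        0,  0,  1;
        0,  0,  1]
    !![ 0,  0,  0,  1,  0,  0,  0,  0,  0,  0;
        0,  0, -1,  0,  1,  0,  1,  0,  0,  0;
        0, -1,  0,  1,  0,  0,  0,  0,  0,  0;
        0,  0,  1,  0,  0,  0, -1,  0,  0,  0;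
        0,  0,  1, -1,  0,  0,  0,  0,  0,  0;
        0,  0,  0,  0, -1,  0,  0,  1,  0,  0;
        1,  1, -1, -1,  0,  0,  0,  0,  0,  0;
        1,  0, -1,  0,  1,  1, -1, -1,  0,  0;
        0,  0,  0,  0, -1,  0,  0,  0,  1,  0;
        0,  0,  0, -1,  1,  1,  0,  0, -1,  0;
        0,  0,  0,  0,  1, -1,  0,  0,  0,  0;
        0,  0,  1, -1,  0,  1, -1,  1, -1,  0;
        0,  1,  0, -1, -1,  0,  1, -1,  1,  0;
        0,  0, -1,  0,  1,  0,  0,  0,  0,  0;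
        0,  0,  1,  0,  1,  0, -1, -1, -1,  1]
    (by decide +kernel)

theorem mulTensor_deg_two_rank_le_general (n : ℕ) (hn : 5 ≤ n) :
    MulTensorRankLE R n 2 (2 * n + 1) := by
  induction n using Nat.strong_induction_on with
  | _ n ih =>
    obtain rfl | rfl | rfl | h : n = 5 ∨ n = 6 ∨ n = 7 ∨ 8 ≤ n := by lia
    · exact mulTensorRankLE_five_two R
    · exact mulTensorRankLE_six_two R
    · exact mulTensorRankLE_seven_two R
    · obtain ⟨k, rfl⟩ := Nat.exists_eq_add_of_le' h
      have hstep := (ih (k + 5) (by lia) (by lia)).add_add_one (mulTensorRankLE_two_two R)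
      exact hstep

end MulTensor

/-- Let `K` be an arbitrary field and `n ≥ 5`.  Then the rank of the
polynomial multiplication tensor `T_{n,2}` over `K` is at most `2n+1`: there exist
`u_ℓ` of degree `≤ n`, `v_ℓ` of degree `≤ 2`, `w_ℓ` of degree `≤ n+2`, `ℓ = 1, …, 2n+1`,
with `T_{n,2} = ∑_ℓ u_ℓ ⊗ v_ℓ ⊗ w_ℓ`. -/
theorem mulTensor_deg_two_rank_le (K : Type) [Field K] (n : ℕ) (hn : 5 ≤ n) :
    ∃ u v w : Fin (2 * n + 1) → Polynomial K,
      (∀ l, (u l).degree ≤ (n : ℕ)) ∧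
      (∀ l, (v l).degree ≤ (2 : ℕ)) ∧
      (∀ l, (w l).degree ≤ ((n + 2 : ℕ))) ∧
      ∑ l, (u l) ⊗ₜ[K] ((v l) ⊗ₜ[K] (w l))
        = ∑ i ∈ Finset.range (n + 1), ∑ j ∈ Finset.range 3,
            ((X : Polynomial K) ^ i) ⊗ₜ[K]
              (((X : Polynomial K) ^ j) ⊗ₜ[K] ((X : Polynomial K) ^ (i + j))) := by
  simpa only [MulTensorRankLE, TensorRankLE, mem_degreeLE, mulTensor] using
    mulTensor_deg_two_rank_le_general K n hn
end

section
/- Let K = Z_2 be the field with two elements. The rank of the polynomial multiplication tensor T_{n,m} over K equals 3 for (n,m) = (1,1), 5 for (1,2), 6 for (1,3), 8 for (1,4), 9 for (1,5), 6 for (2,2), 8 for (2,3), 10 for (2,4), and 9 for (3,3). -/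
open Polynomial TensorProduct

/-- The rank of the polynomial multiplication tensor `T_{n,m}` over the field `K`: the least
`r` such that `T_{n,m} = ∑_{ℓ=1}^r u_ℓ ⊗ v_ℓ ⊗ w_ℓ` for polynomials with `deg u_ℓ ≤ n`,
`deg v_ℓ ≤ m`, `deg w_ℓ ≤ n+m`. -/
noncomputable def polyMulRank (K : Type) [Field K] (n m : ℕ) : ℕ :=
  sInf {r : ℕ | ∃ u v w : Fin r → Polynomial K,
    (∀ l, (u l).degree ≤ (n : ℕ)) ∧
    (∀ l, (v l).degree ≤ (m : ℕ)) ∧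
    (∀ l, (w l).degree ≤ ((n + m : ℕ))) ∧
    ∑ l, (u l) ⊗ₜ[K] ((v l) ⊗ₜ[K] (w l))
      = ∑ i ∈ Finset.range (n + 1), ∑ j ∈ Finset.range (m + 1),
          ((X : Polynomial K) ^ i) ⊗ₜ[K]
            (((X : Polynomial K) ^ j) ⊗ₜ[K] ((X : Polynomial K) ^ (i + j)))}

/-!
In an algorithm computing `f * g` as the sum of the `(φ l f * ψ l g) • w l`, the forms `ψ l` with
`φ l f ≠ 0` separate the polynomials of degree at most `m`, for every `f ≠ 0`. So `f ↦ (φ l f)ₗ` is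
a linear code of dimension `n + 1` and minimal distance at least `m + 1`, and Griesmer's bound gives
all lower bounds except those for `T_{2,3}` and `T_{3,3}`. There one also uses that a polynomial `f`
whose word has minimal weight `m + 1` divides `w l` whenever `φ l f ≠ 0`: this limits the overlap of
the words of coprime polynomials. In an algorithm of length `7` for `T_{2,3}`, the words of `1`,
`X ^ 2` and `1 + X + X ^ 2` would share a coordinate `l`, and the cubic `w l` would be divisible by
`X ^ 2 * (1 + X + X ^ 2)`; for `T_{3,3}` and length `8`, the total weight of the code would exceed
what Plotkin's averaging allows.

The upper bounds come from splitting a factor, from Karatsuba's algorithm, and from Chinese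
remaindering with moduli `X ^ (k + 1)`, `X + 1`, `X ^ 2 + X + 1` and infinity.
-/

section Representation

variable {K : Type} [Field K] {n m : ℕ} {ι : Type} [Fintype ι]

/-- A representation of the tensor `T_{n,m}`, with summands indexed by an arbitrary finite type. -/
def IsMulRepresentation (n m : ℕ) (u v w : ι → K[X]) : Prop :=
  (∀ l, (u l).degree ≤ (n : ℕ)) ∧
  (∀ l, (v l).degree ≤ (m : ℕ)) ∧
  (∀ l, (w l).degree ≤ ((n + m : ℕ))) ∧
  ∑ l, (u l) ⊗ₜ[K] ((v l) ⊗ₜ[K] (w l))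
    = ∑ i ∈ Finset.range (n + 1), ∑ j ∈ Finset.range (m + 1),
        ((X : K[X]) ^ i) ⊗ₜ[K] (((X : K[X]) ^ j) ⊗ₜ[K] ((X : K[X]) ^ (i + j)))

/-- A bilinear algorithm for multiplying polynomials of degrees at most `n` and `m`: the scalar
products `φ l f * ψ l g` are the coefficients of `f * g` with respect to the `w l`. The linear forms
are defined on all of `K[X]`, so that they can be composed with linear maps not bounding degrees. -/
def IsMulAlgorithm (n m : ℕ) (φ ψ : ι → Module.Dual K K[X]) (w : ι → K[X]) : Prop :=
  ∀ ⦃f g : K[X]⦄, f.natDegree ≤ n → g.natDegree ≤ m → f * g = ∑ l, (φ l f * ψ l g) • w l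

theorem IsMulRepresentation.comp_equiv {κ : Type} [Fintype κ] {u v w : ι → K[X]}
    (h : IsMulRepresentation n m u v w) (e : κ ≃ ι) :
    IsMulRepresentation n m (u ∘ e) (v ∘ e) (w ∘ e) :=
  ⟨fun l => h.1 (e l), fun l => h.2.1 (e l), fun l => h.2.2.1 (e l),
    (e.sum_comp fun l => u l ⊗ₜ[K] (v l ⊗ₜ[K] w l)).trans h.2.2.2⟩

theorem eq_sum_coeff_smul_X_pow {f : K[X]} (hf : f.natDegree ≤ n) :
    f = ∑ i ∈ Finset.range (n + 1), f.coeff i • X ^ i := by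
  simpa only [smul_eq_C_mul] using f.as_sum_range_C_mul_X_pow' (Nat.lt_succ_of_le hf)

theorem isMulAlgorithm_of_X_pow {φ ψ : ι → Module.Dual K K[X]} {w : ι → K[X]}
    (h : ∀ i ∈ Finset.range (n + 1), ∀ j ∈ Finset.range (m + 1),
      X ^ (i + j) = ∑ l, (φ l (X ^ i) * ψ l (X ^ j)) • w l) :
    IsMulAlgorithm n m φ ψ w := by
  intro f g hf hg
  calc f * g = ∑ i ∈ Finset.range (n + 1), ∑ j ∈ Finset.range (m + 1),
        (f.coeff i * g.coeff j) • (X : K[X]) ^ (i + j) := by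
        conv_lhs => rw [eq_sum_coeff_smul_X_pow hf, eq_sum_coeff_smul_X_pow hg]
        simp only [Finset.sum_mul_sum, smul_mul_smul_comm, pow_add]
    _ = ∑ i ∈ Finset.range (n + 1), ∑ j ∈ Finset.range (m + 1), ∑ l,
        (f.coeff i * φ l (X ^ i) * (g.coeff j * ψ l (X ^ j))) • w l := by
        refine Finset.sum_congr rfl fun i hi => Finset.sum_congr rfl fun j hj => ?_
        rw [h i hi j hj, Finset.smul_sum]
        exact Finset.sum_congr rfl fun l _ => by rw [smul_smul, mul_mul_mul_comm]
    _ = ∑ l, (φ l f * ψ l g) • w l := by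
        conv_rhs =>
          enter [2, l]
          rw [eq_sum_coeff_smul_X_pow hf, eq_sum_coeff_smul_X_pow hg]
        simp only [map_sum, map_smul, smul_eq_mul, Finset.sum_mul_sum, Finset.sum_smul]
        rw [Finset.sum_comm_cycle]

theorem IsMulRepresentation.exists_isMulAlgorithm {u v w : ι → K[X]}
    (h : IsMulRepresentation n m u v w) :
    ∃ φ ψ : ι → Module.Dual K K[X], IsMulAlgorithm n m φ ψ w := by
  let coeffForm (p : K[X]) : Module.Dual K K[X] := (basisMonomials K).constr K p.coeff
  have coeffForm_X_pow (p : K[X]) (i : ℕ) : coeffForm p (X ^ i) = p.coeff i := by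
    simpa [coeffForm, X_pow_eq_monomial] using (basisMonomials K).constr_basis K p.coeff i
  refine ⟨fun l => coeffForm (u l), fun l => coeffForm (v l),
    isMulAlgorithm_of_X_pow fun i hi j hj => ?_⟩
  let contract : K[X] ⊗[K] (K[X] ⊗[K] K[X]) →ₗ[K] K[X] :=
    (TensorProduct.lid K K[X]).toLinearMap ∘ₗ TensorProduct.map (lcoeff K i)
      ((TensorProduct.lid K K[X]).toLinearMap ∘ₗ TensorProduct.map (lcoeff K j) LinearMap.id)
  have hcontract (p q r : K[X]) :
      contract (p ⊗ₜ (q ⊗ₜ r)) = (p.coeff i * q.coeff j) • r := by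
    simp [contract, smul_smul, mul_comm]
  have := congrArg contract h.2.2.2
  simp only [map_sum, hcontract, coeff_X_pow] at this
  rw [Finset.sum_eq_single_of_mem i hi (fun k _ hk => by simp [hk.symm]),
    Finset.sum_eq_single_of_mem j hj (fun k _ hk => by simp [hk.symm])] at this
  simpa [coeffForm_X_pow] using this.symm

theorem natDegree_X_pow_le_of_mem_range {i : ℕ} (hi : i ∈ Finset.range (n + 1)) :
    ((X : K[X]) ^ i).natDegree ≤ n :=
  (natDegree_X_pow i).trans_le (Finset.mem_range_succ_iff.mp hi)

theorem degree_sum_smul_X_pow_le (a : ℕ → K) :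
    (∑ i ∈ Finset.range (n + 1), a i • (X : K[X]) ^ i).degree ≤ n := by
  refine mem_degreeLE.mp (Submodule.sum_mem _ fun i hi => Submodule.smul_mem _ _ ?_)
  rw [mem_degreeLE, degree_X_pow]
  exact_mod_cast Finset.mem_range_succ_iff.mp hi

theorem sum_tmul_sum_tmul (s t : Finset ℕ) (a b : ℕ → K) (r : K[X]) :
    (∑ i ∈ s, a i • (X : K[X]) ^ i) ⊗ₜ[K] ((∑ j ∈ t, b j • (X : K[X]) ^ j) ⊗ₜ[K] r) =
      ∑ i ∈ s, ∑ j ∈ t, ((X : K[X]) ^ i) ⊗ₜ[K] (((X : K[X]) ^ j) ⊗ₜ[K] ((a i * b j) • r)) := by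
  simp only [sum_tmul, tmul_sum, smul_tmul, ← tmul_smul, smul_smul]
  exact Finset.sum_comm

theorem IsMulAlgorithm.isMulRepresentation {φ ψ : ι → Module.Dual K K[X]} {w : ι → K[X]}
    (h : IsMulAlgorithm n m φ ψ w) :
    IsMulRepresentation n m
      (fun l => ∑ i ∈ Finset.range (n + 1), φ l (X ^ i) • X ^ i)
      (fun l => ∑ j ∈ Finset.range (m + 1), ψ l (X ^ j) • X ^ j)
      (fun l => w l %ₘ X ^ (n + m + 1)) := by
  refine ⟨fun l => degree_sum_smul_X_pow_le _, fun l => degree_sum_smul_X_pow_le _, fun l => ?_, ?_⟩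
  · have := degree_modByMonic_lt (w l) (monic_X_pow (n + m + 1))
    rw [degree_X_pow] at this
    exact Order.le_of_lt_succ this
  simp only [sum_tmul_sum_tmul]
  rw [← Finset.sum_comm_cycle]
  refine Finset.sum_congr rfl fun i hi => Finset.sum_congr rfl fun j hj => ?_
  have hij : i + j < n + m + 1 := by
    have := Finset.mem_range.mp hi
    have := Finset.mem_range.mp hj
    omega
  rw [← tmul_sum, ← tmul_sum]
  congr 2
  calc ∑ l, (φ l (X ^ i) * ψ l (X ^ j)) • (w l %ₘ X ^ (n + m + 1))
      = (∑ l, (φ l (X ^ i) * ψ l (X ^ j)) • w l) %ₘ X ^ (n + m + 1) := by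
        simp only [← modByMonicHom_apply, map_sum, map_smul]
    _ = X ^ (i + j) %ₘ X ^ (n + m + 1) := by
        rw [pow_add X i j,
          h (natDegree_X_pow_le_of_mem_range hi) (natDegree_X_pow_le_of_mem_range hj)]
    _ = X ^ (i + j) := by
        rw [modByMonic_eq_self_iff (monic_X_pow _), degree_X_pow, degree_X_pow]
        exact_mod_cast hij

theorem isMulAlgorithm_coeff (n m : ℕ) :
    IsMulAlgorithm n m (fun l : Fin (n + 1) × Fin (m + 1) => lcoeff K l.1)
      (fun l => lcoeff K l.2) fun l => X ^ (l.1 + l.2 : ℕ) := by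
  intro f g hf hg
  conv_lhs => rw [eq_sum_coeff_smul_X_pow hf, eq_sum_coeff_smul_X_pow hg]
  simp only [Finset.sum_range, Fintype.sum_prod_type, Finset.sum_mul_sum, smul_mul_smul_comm,
    pow_add, lcoeff_apply]

theorem IsMulAlgorithm.polyMulRank_le {φ ψ : ι → Module.Dual K K[X]} {w : ι → K[X]}
    (h : IsMulAlgorithm n m φ ψ w) : polyMulRank K n m ≤ Fintype.card ι :=
  Nat.sInf_le ⟨_, _, _, h.isMulRepresentation.comp_equiv (Fintype.equivFin ι).symm⟩

variable (K n m) in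
theorem exists_isMulAlgorithm_polyMulRank :
    ∃ (φ ψ : Fin (polyMulRank K n m) → Module.Dual K K[X]) (w : _ → K[X]),
      IsMulAlgorithm n m φ ψ w := by
  obtain ⟨u, v, w, h⟩ := Nat.sInf_mem (s := {r : ℕ | ∃ u v w : Fin r → K[X],
    IsMulRepresentation n m u v w}) ⟨_, _, _, _,
      (isMulAlgorithm_coeff n m).isMulRepresentation.comp_equiv finProdFinEquiv.symm⟩
  obtain ⟨φ, ψ, h⟩ := h.exists_isMulAlgorithm
  exact ⟨φ, ψ, w, h⟩

end Representation

section UpperBounds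

variable {K : Type} [Field K] {n m : ℕ}

theorem polyMulRank_le_sum {κ : Type} [Fintype κ] {a b : κ → ℕ} (F G L : κ → K[X] →ₗ[K] K[X])
    (hF : ∀ i f, f.natDegree ≤ n → (F i f).natDegree ≤ a i)
    (hG : ∀ i g, g.natDegree ≤ m → (G i g).natDegree ≤ b i)
    (h : ∀ f g : K[X], f.natDegree ≤ n → g.natDegree ≤ m → f * g = ∑ i, L i (F i f * G i g)) :
    polyMulRank K n m ≤ ∑ i, polyMulRank K (a i) (b i) := by
  choose φ ψ w hA using fun i => exists_isMulAlgorithm_polyMulRank K (a i) (b i)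
  have : IsMulAlgorithm n m (fun l : Σ i, Fin (polyMulRank K (a i) (b i)) => φ l.1 l.2 ∘ₗ F l.1)
      (fun l => ψ l.1 l.2 ∘ₗ G l.1) (fun l => L l.1 (w l.1 l.2)) := by
    intro f g hf hg
    rw [h f g hf hg, Fintype.sum_sigma]
    refine Finset.sum_congr rfl fun i _ => ?_
    rw [hA i (hF i f hf) (hG i g hg), map_sum]
    simp only [map_smul, LinearMap.comp_apply]
  simpa using this.polyMulRank_le

theorem polyMulRank_le_mul : polyMulRank K n m ≤ (n + 1) * (m + 1) := by
  simpa using (isMulAlgorithm_coeff (K := K) n m).polyMulRank_le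

/-- Division by a polynomial `p` as a `K`-linear map, the companion of
`Polynomial.modByMonicHom`; it vanishes if `p` is not monic. -/
noncomputable def divByMonicHom (p : K[X]) : K[X] →ₗ[K] K[X] where
  toFun f := f /ₘ p
  map_add' f g := by
    by_cases hp : p.Monic
    · refine (div_modByMonic_unique _ (f %ₘ p + g %ₘ p) hp ⟨?_, ?_⟩).1
      · linear_combination modByMonic_add_div f p + modByMonic_add_div g p
      · exact (degree_add_le _ _).trans_lt
          (max_lt (degree_modByMonic_lt f hp) (degree_modByMonic_lt g hp))
    · simp only [divByMonic_eq_of_not_monic _ hp, add_zero]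
  map_smul' c f := by
    by_cases hp : p.Monic
    · refine (div_modByMonic_unique _ (c • (f %ₘ p)) hp ⟨?_, ?_⟩).1
      · rw [RingHom.id_apply, mul_smul_comm, ← smul_add, modByMonic_add_div]
      · exact (degree_smul_le c _).trans_lt (degree_modByMonic_lt f hp)
    · simp only [divByMonic_eq_of_not_monic _ hp, smul_zero]

@[simp]
theorem divByMonicHom_apply (p f : K[X]) : divByMonicHom p f = f /ₘ p := rfl

theorem natDegree_modByMonic_X_pow_succ_le (f : K[X]) (k : ℕ) :
    (f %ₘ X ^ (k + 1)).natDegree ≤ k := by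
  have := natDegree_modByMonic_lt f (monic_X_pow (k + 1))
    (ne_of_apply_ne natDegree (by simp))
  rw [natDegree_X_pow] at this
  omega

theorem natDegree_divByMonic_X_pow_le {f : K[X]} {k l : ℕ} (hf : f.natDegree ≤ k + l) :
    (f /ₘ X ^ k).natDegree ≤ l := by
  rw [natDegree_divByMonic f (monic_X_pow k), natDegree_X_pow]
  omega

theorem polyMulRank_le_add_of_split (n m k : ℕ) :
    polyMulRank K n (m + k + 1) ≤ polyMulRank K n m + polyMulRank K n k := by
  have := polyMulRank_le_sum (K := K) (n := n) (m := m + k + 1) (a := ![n, n]) (b := ![m, k])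
    (fun _ => LinearMap.id) ![modByMonicHom (X ^ (m + 1)), divByMonicHom (X ^ (m + 1))]
    ![LinearMap.id, LinearMap.mulLeft K (X ^ (m + 1))]
    (by simp [Fin.forall_fin_two])
    (by
      rw [Fin.forall_fin_two]
      exact ⟨fun g _ => natDegree_modByMonic_X_pow_succ_le g m,
        fun g hg => show (g /ₘ X ^ (m + 1)).natDegree ≤ k from
          natDegree_divByMonic_X_pow_le (by omega)⟩)
    (fun f g _ _ => by
      simp only [Fin.sum_univ_two, Matrix.cons_val_zero, Matrix.cons_val_one, LinearMap.id_apply,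
        LinearMap.mulLeft_apply, modByMonicHom_apply, divByMonicHom_apply]
      linear_combination -f * modByMonic_add_div g (X ^ (m + 1)))
  simpa [Fin.sum_univ_two] using this

/-- Karatsuba: besides `f₀ * g₀` and `f₁ * g₁`, the product of `f₀ + Y * f₁` and `g₀ + Y * g₁`
needs only `(f₀ + f₁) * (g₀ + g₁)`. -/
theorem polyMulRank_two_mul_add_one_le (n : ℕ) :
    polyMulRank K (2 * n + 1) (2 * n + 1) ≤ 3 * polyMulRank K n n := by
  let Y : K[X] := X ^ (n + 1)
  let F : Fin 3 → K[X] →ₗ[K] K[X] :=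
    ![modByMonicHom Y, divByMonicHom Y, modByMonicHom Y + divByMonicHom Y]
  have hF : ∀ i f, f.natDegree ≤ 2 * n + 1 → (F i f).natDegree ≤ n := by
    have hmod (f : K[X]) : (f %ₘ Y).natDegree ≤ n := natDegree_modByMonic_X_pow_succ_le f n
    have hdiv (f : K[X]) (hf : f.natDegree ≤ 2 * n + 1) : (f /ₘ Y).natDegree ≤ n :=
      natDegree_divByMonic_X_pow_le (by omega)
    intro i f hf
    fin_cases i
    exacts [hmod f, hdiv f hf, natDegree_add_le_of_degree_le (hmod f) (hdiv f hf)]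
  have := polyMulRank_le_sum F F
    ![LinearMap.mulLeft K (1 - Y), LinearMap.mulLeft K (Y ^ 2 - Y), LinearMap.mulLeft K Y] hF hF
    fun f g _ _ => by
      simp only [Fin.sum_univ_three, F, Matrix.cons_val, LinearMap.mulLeft_apply,
        LinearMap.add_apply, modByMonicHom_apply, divByMonicHom_apply]
      conv_lhs => rw [← modByMonic_add_div f Y, ← modByMonic_add_div g Y]
      ring
  simpa using this

theorem exists_mul_modByMonic_prod_eq_sum {κ : Type} [Fintype κ] [Nonempty κ] {P : κ → K[X]}
    (hmonic : ∀ i, (P i).Monic) (hP : Pairwise fun i j => IsCoprime (P i) (P j)) :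
    ∃ L : κ → K[X] →ₗ[K] K[X], ∀ f g : K[X],
      f * g %ₘ ∏ i, P i = ∑ i, L i ((f %ₘ P i) * (g %ₘ P i)) := by
  classical
  obtain ⟨μ, hμ⟩ := exists_sum_eq_one_iff_pairwise_coprime'.mpr hP
  let e (i : κ) : K[X] := μ i * ∏ j ∈ {i}ᶜ, P j
  refine ⟨fun i => modByMonicHom (∏ i, P i) ∘ₗ LinearMap.mulLeft K (e i), fun f g => ?_⟩
  simp only [LinearMap.comp_apply, LinearMap.mulLeft_apply]
  rw [← map_sum, modByMonicHom_apply]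
  refine modByMonic_eq_of_dvd_sub (monic_prod_of_monic _ _ fun i _ => hmonic i) ?_
  have hdvd (i : κ) : P i ∣ f * g - (f %ₘ P i) * (g %ₘ P i) :=
    ⟨f * (g /ₘ P i) + (f /ₘ P i) * (g %ₘ P i), by
      linear_combination -f * modByMonic_add_div g (P i)
        - (g %ₘ P i) * modByMonic_add_div f (P i)⟩
  calc ∏ i, P i ∣ ∑ i, e i * (f * g - (f %ₘ P i) * (g %ₘ P i)) :=
        Finset.dvd_sum fun i _ => by
          rw [Fintype.prod_eq_mul_prod_compl i, mul_comm (P i)]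
          exact mul_dvd_mul (dvd_mul_left _ _) (hdvd i)
    _ = f * g - ∑ i, e i * ((f %ₘ P i) * (g %ₘ P i)) := by
        simp only [mul_sub, Finset.sum_sub_distrib, ← Finset.sum_mul]
        rw [hμ, one_mul]

theorem degree_mul_lt_of_degree_lt {p q : K[X]} {a b : ℕ} (hp : p.degree < a)
    (hq : q.natDegree ≤ b) : (p * q).degree < (a + b : ℕ) := by
  rcases eq_or_ne p 0 with rfl | hp0
  · simp
  · have := (natDegree_lt_iff_degree_lt hp0).mpr hp
    exact degree_le_natDegree.trans_lt
      (Nat.cast_lt.mpr (natDegree_mul_le.trans_lt (by omega)))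

/-- A product modulo `Q` and the product of the `s + 1` leading coefficients of the factors, the
residue at infinity, determine the product if `deg Q + s` bounds its degree. -/
theorem mul_eq_modByMonic_add_leading {f g Q : K[X]} (hf : f.natDegree ≤ n) (hg : g.natDegree ≤ m)
    (hQ : Q.Monic) {s : ℕ} (hsn : s ≤ n) (hsm : s ≤ m) (hdeg : n + m = Q.natDegree + s) :
    let h := X ^ (n + m - 2 * s) * ((f /ₘ X ^ (n - s)) * (g /ₘ X ^ (m - s)))
    f * g = f * g %ₘ Q + (h - h %ₘ Q) := by
  intro h
  suffices hlt : (f * g - h).degree < Q.degree by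
    have := (modByMonic_eq_self_iff hQ).mpr hlt
    rw [sub_modByMonic] at this
    linear_combination -this
  have hX : (X : K[X]) ^ (n + m - 2 * s) = X ^ (n - s) * X ^ (m - s) := by
    rw [← pow_add]
    congr 1
    omega
  have hsplit : f * g - h =
      (f %ₘ X ^ (n - s)) * g + (g %ₘ X ^ (m - s)) * (X ^ (n - s) * (f /ₘ X ^ (n - s))) := by
    simp only [h, hX]
    linear_combination -g * modByMonic_add_div f (X ^ (n - s))
      - X ^ (n - s) * (f /ₘ X ^ (n - s)) * modByMonic_add_div g (X ^ (m - s))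
  have hlow (p : K[X]) (k : ℕ) : (p %ₘ X ^ k).degree < k := by
    simpa using degree_modByMonic_lt p (monic_X_pow k)
  have hhigh : (X ^ (n - s) * (f /ₘ X ^ (n - s))).natDegree ≤ n - s + s :=
    natDegree_mul_le_of_le (natDegree_X_pow_le _) (natDegree_divByMonic_X_pow_le (by omega))
  rw [hsplit, degree_eq_natDegree hQ.ne_zero]
  refine (degree_add_le _ _).trans_lt (max_lt ?_ ?_)
  · convert degree_mul_lt_of_degree_lt (hlow f (n - s)) hg using 2
    omega
  · convert degree_mul_lt_of_degree_lt (hlow g (m - s)) hhigh using 2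
    omega

theorem polyMulRank_le_of_pairwise_isCoprime {κ : Type} [Fintype κ] [Nonempty κ] {P : κ → K[X]}
    {d : κ → ℕ} {s : ℕ} (hmonic : ∀ i, (P i).Monic) (hd : ∀ i, (P i).natDegree = d i + 1)
    (hP : Pairwise fun i j => IsCoprime (P i) (P j)) (hsn : s ≤ n) (hsm : s ≤ m)
    (hdeg : n + m = ∑ i, (d i + 1) + s) :
    polyMulRank K n m ≤ polyMulRank K s s + ∑ i, polyMulRank K (d i) (d i) := by
  obtain ⟨L, hL⟩ := exists_mul_modByMonic_prod_eq_sum hmonic hP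
  have hQ : (∏ i, P i).Monic := monic_prod_of_monic _ _ fun i _ => hmonic i
  have hQdeg : n + m = (∏ i, P i).natDegree + s := by
    rw [natDegree_prod_of_monic _ _ fun i _ => hmonic i, hdeg]
    simp only [hd]
  let residue (k : ℕ) (i : Option κ) : K[X] →ₗ[K] K[X] :=
    i.elim (divByMonicHom (X ^ (k - s))) fun i => modByMonicHom (P i)
  have hres (k : ℕ) (hk : s ≤ k) (i : Option κ) (f : K[X]) (hf : f.natDegree ≤ k) :
      (residue k i f).natDegree ≤ i.elim s d := by
    rcases i with _ | i
    · exact natDegree_divByMonic_X_pow_le (hf.trans_eq (Nat.sub_add_cancel hk).symm)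
    · have := natDegree_modByMonic_lt f (hmonic i) (ne_of_apply_ne natDegree (by simp [hd]))
      exact Nat.le_of_lt_succ (this.trans_eq (hd i))
  have := polyMulRank_le_sum (residue n) (residue m)
    (fun i => i.elim ((LinearMap.id - modByMonicHom (∏ i, P i)) ∘ₗ
      LinearMap.mulLeft K (X ^ (n + m - 2 * s))) L)
    (hres n hsn) (hres m hsm) fun f g hf hg => by
      rw [Fintype.sum_option, add_comm]
      exact (mul_eq_modByMonic_add_leading hf hg hQ hsn hsm hQdeg).trans
        (congrArg (· + _) (hL f g))
  simpa [Fintype.sum_option] using this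

theorem polyMulRank_le_of_add_eq {k s : ℕ} (hsn : s ≤ n) (hsm : s ≤ m) (h : n + m = k + s + 4) :
    polyMulRank K n m ≤ polyMulRank K s s + polyMulRank K k k + 4 := by
  let P : Fin 3 → K[X] := ![X ^ (k + 1), X + 1, X ^ 2 + X + 1]
  have hmonic : ∀ i, (P i).Monic := by
    have : (X ^ 2 + X + 1 : K[X]).Monic := by monicity!
    simp only [Fin.forall_fin_succ]
    exact ⟨monic_X_pow _, monic_X_add_C 1, this, nofun⟩
  have hdeg : ∀ i, (P i).natDegree = (![k, 0, 1] : Fin 3 → ℕ) i + 1 := by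
    have : (X ^ 2 + X + 1 : K[X]).natDegree = 2 := by compute_degree!
    simp only [Fin.forall_fin_succ]
    exact ⟨natDegree_X_pow _, natDegree_X_add_C 1, this, nofun⟩
  have hcoprime : Pairwise fun i j => IsCoprime (P i) (P j) := by
    have h₀₁ : IsCoprime (P 0) (P 1) := IsCoprime.pow_left (x := X) (y := X + 1) ⟨-1, 1, by ring⟩
    have h₀₂ : IsCoprime (P 0) (P 2) :=
      IsCoprime.pow_left (x := X) (y := X ^ 2 + X + 1) ⟨-(X + 1), 1, by ring⟩
    have h₁₂ : IsCoprime (P 1) (P 2) :=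
      show IsCoprime (X + 1) (X ^ 2 + X + 1) from ⟨-X, 1, by ring⟩
    intro i j hij
    fin_cases i <;> fin_cases j
    exacts [absurd rfl hij, h₀₁, h₀₂, h₀₁.symm, absurd rfl hij, h₁₂, h₀₂.symm, h₁₂.symm,
      absurd rfl hij]
  have hle := polyMulRank_le_of_pairwise_isCoprime hmonic hdeg hcoprime hsn hsm
    (by simp only [Fin.sum_univ_three, Matrix.cons_val]; omega)
  have h₀ : polyMulRank K 0 0 ≤ 1 := polyMulRank_le_mul
  have h₁ : polyMulRank K 1 1 ≤ 3 * polyMulRank K 0 0 := polyMulRank_two_mul_add_one_le 0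
  simp only [Fin.sum_univ_three, Matrix.cons_val] at hle
  omega

end UpperBounds

section LinearCodes

open scoped Finset

variable {K : Type*} [Field K] [DecidableEq K] {ι : Type*} [Fintype ι]

theorem hammingNorm_eq_sum (x : ι → K) : hammingNorm x = ∑ l, if x l = 0 then 0 else 1 := by
  rw [hammingNorm, Finset.card_filter]
  exact Finset.sum_congr rfl fun l _ => ite_not _ _ _

theorem card_subtype_eq_zero_add_hammingNorm (x : ι → K) :
    Fintype.card {l // x l = 0} + hammingNorm x = Fintype.card ι := by
  rw [Fintype.card_subtype, hammingNorm, Finset.card_filter_add_card_filter_not, Finset.card_univ]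

variable [Fintype K]

theorem sum_ite_add_mul_eq_zero_add (a b : K) :
    (∑ t : K, if a + t * b = 0 then 0 else 1) + (if b = 0 then 0 else 1) =
      Fintype.card K * if b = 0 ∧ a = 0 then 0 else 1 := by
  by_cases hb : b = 0
  · simp [hb]
  · have hroot (t : K) : a + t * b = 0 ↔ t = -a / b := by
      rw [eq_div_iff hb, eq_neg_iff_add_eq_zero, add_comm]
    have hq : 1 ≤ Fintype.card K := Fintype.card_pos
    simp only [hroot, hb, false_and, if_false, ← ite_not (_ = _), Finset.sum_boole]
    rw [Finset.filter_ne', Finset.card_erase_of_mem (Finset.mem_univ _), Finset.card_univ]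
    simp
    omega

theorem sum_hammingNorm_add_smul (x y : ι → K) :
    ∑ t : K, hammingNorm (x + t • y) + hammingNorm y =
      Fintype.card K * (hammingNorm (fun l : {l // y l = 0} => x l) + hammingNorm y) := by
  have hres : hammingNorm (fun l : {l // y l = 0} => x l) + hammingNorm y =
      ∑ l, if y l = 0 ∧ x l = 0 then 0 else 1 := by
    rw [← Fintype.sum_subtype_add_sum_subtype (fun l => y l = 0), hammingNorm_eq_sum, hammingNorm,
      ← Fintype.card_subtype, ← Finset.card_univ, Finset.card_eq_sum_ones]
    congr 1 <;> exact Finset.sum_congr rfl fun l _ => by simp [l.2]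
  simp only [hres, Finset.mul_sum, ← sum_ite_add_mul_eq_zero_add, Finset.sum_add_distrib]
  simp only [hammingNorm_eq_sum, Pi.add_apply, Pi.smul_apply, smul_eq_mul]
  rw [Finset.sum_comm]

/-- In coding theory `x`, restricted to the zeros of `y`, is a word of the residual code of `y`. -/
theorem hammingNorm_le_card_mul_residual {x y : ι → K}
    (h : ∀ t : K, hammingNorm y ≤ hammingNorm (x + t • y)) :
    hammingNorm y ≤ Fintype.card K * hammingNorm (fun l : {l // y l = 0} => x l) := by
  have hle : Fintype.card K * hammingNorm y ≤ ∑ t : K, hammingNorm (x + t • y) := by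
    simpa using Finset.card_nsmul_le_sum Finset.univ _ _ fun t _ => h t
  have := sum_hammingNorm_add_smul x y
  rw [mul_add] at this
  omega

theorem griesmer_bound {V : Type*} [AddCommGroup V] [Module K V] [FiniteDimensional K V] {d : ℕ}
    (c : V →ₗ[K] ι → K) (hd : ∀ v ≠ 0, d ≤ hammingNorm (c v)) :
    ∑ i ∈ Finset.range (Module.finrank K V), d ⌈/⌉ Fintype.card K ^ i ≤ Fintype.card ι := by
  induction hk : Module.finrank K V generalizing V ι d with
  | zero => simp
  | succ k ih =>
    set q := Fintype.card K
    have : Nontrivial V := Module.nontrivial_of_finrank_pos (R := K) (by omega)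
    obtain ⟨v, hv, hmin⟩ := exists_minimalFor_of_wellFoundedLT (fun v : V => v ≠ 0)
      (fun v => hammingNorm (c v)) (exists_ne 0)
    obtain ⟨W, hW⟩ := (K ∙ v).exists_isCompl
    have hfinrank : Module.finrank K W = k := by
      have := Submodule.finrank_add_eq_of_isCompl hW
      rw [finrank_span_singleton hv] at this
      omega
    let residual : W →ₗ[K] {l // c v l = 0} → K :=
      LinearMap.funLeft K K Subtype.val ∘ₗ c ∘ₗ W.subtype
    have hresidual : ∀ u ≠ 0, hammingNorm (c v) ⌈/⌉ q ≤ hammingNorm (residual u) := by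
      intro u hu
      have hne (t : K) : (u : V) + t • v ≠ 0 := fun h => hu <| Subtype.ext <|
        Submodule.disjoint_def.mp hW.disjoint u
          (eq_neg_of_add_eq_zero_left h ▸ neg_mem (Submodule.smul_mem _ t
            (Submodule.mem_span_singleton_self v))) u.2
      refine (ceilDiv_le_iff_le_mul Fintype.card_pos).mpr
        (hammingNorm_le_card_mul_residual (x := c u) (y := c v) fun t => ?_)
      rw [← map_smul, ← map_add]
      exact (le_total _ _).elim id (hmin (hne t))
    have hceil (i : ℕ) : d ⌈/⌉ q ^ (i + 1) ≤ hammingNorm (c v) ⌈/⌉ q ⌈/⌉ q ^ i := by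
      have hq : 0 < q := Fintype.card_pos
      rw [ceilDiv_le_iff_le_mul (pow_pos hq _), pow_succ', mul_assoc]
      calc d ≤ hammingNorm (c v) := hd v hv
        _ ≤ q * (hammingNorm (c v) ⌈/⌉ q) := le_smul_ceilDiv hq
        _ ≤ _ := Nat.mul_le_mul_left q (le_smul_ceilDiv (pow_pos hq i))
    rw [Finset.sum_range_succ', pow_zero, ceilDiv_one,
      ← card_subtype_eq_zero_add_hammingNorm (c v)]
    exact add_le_add ((Finset.sum_le_sum fun i _ => hceil i).trans (ih residual hresidual hfinrank))
      (hd v hv)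

theorem card_mul_card_filter_ne_zero_le {V : Type*} [AddCommGroup V] [Module K V] [Fintype V]
    (a : Module.Dual K V) :
    Fintype.card K * #{v | a v ≠ 0} ≤ (Fintype.card K - 1) * Fintype.card V := by
  rcases eq_or_ne a 0 with rfl | ha
  · simp
  have hker : Fintype.card V = Fintype.card K * #{v | a v = 0} := by
    have e := a.quotKerEquivOfSurjective (LinearMap.surjective ha)
    have := a.ker.card_eq_card_quotient_mul_card
    rw [Nat.card_congr e.toEquiv, mul_comm] at this
    simp only [← Nat.card_eq_fintype_card, ← Fintype.card_subtype]
    exact this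
  have hsplit : #{v | a v = 0} + #{v | a v ≠ 0} = Fintype.card V :=
    Finset.card_filter_add_card_filter_not _
  rw [Nat.sub_mul, one_mul, ← hsplit, mul_add]
  omega

theorem card_mul_sum_hammingNorm_le {V : Type*} [AddCommGroup V] [Module K V] [Fintype V]
    (c : V →ₗ[K] ι → K) :
    Fintype.card K * ∑ v, hammingNorm (c v) ≤
      Fintype.card ι * ((Fintype.card K - 1) * Fintype.card V) := by
  simp only [hammingNorm, Finset.card_filter]
  rw [Finset.sum_comm, Finset.mul_sum, ← smul_eq_mul, ← Finset.card_univ (α := ι)]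
  refine Finset.sum_le_card_nsmul _ _ _ fun l _ => ?_
  rw [← Finset.card_filter]
  exact card_mul_card_filter_ne_zero_le (LinearMap.proj l ∘ₗ c)

/-- A sharpened Plotkin bound: each coordinate vanishes on at least a fraction `1 / q` of all words,
and only the weights of words outside `S` are estimated by `d`. -/
theorem card_mul_sum_hammingNorm_add_le {V : Type*} [AddCommGroup V] [Module K V] [Fintype V]
    {d : ℕ} (c : V →ₗ[K] ι → K) (hd : ∀ v ≠ 0, d ≤ hammingNorm (c v)) {S : Finset V}
    (hS : 0 ∉ S) :
    Fintype.card K * (∑ v ∈ S, hammingNorm (c v) + Fintype.card V * d) ≤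
      Fintype.card ι * ((Fintype.card K - 1) * Fintype.card V) +
        Fintype.card K * ((#S + 1) * d) := by
  classical
  have hrest : #(insert 0 S)ᶜ * d ≤ ∑ v ∈ (insert 0 S)ᶜ, hammingNorm (c v) := by
    refine Finset.card_nsmul_le_sum _ _ _ fun v hv => hd v fun h => ?_
    simp [h] at hv
  have hcard : #(insert 0 S)ᶜ + (#S + 1) = Fintype.card V := by
    rw [← Finset.card_insert_of_notMem hS, Finset.card_compl_add_card]
  have hsum : ∑ v ∈ S, hammingNorm (c v) + ∑ v ∈ (insert 0 S)ᶜ, hammingNorm (c v) =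
      ∑ v, hammingNorm (c v) := by
    rw [← Finset.sum_add_sum_compl (insert 0 S), Finset.sum_insert hS, map_zero,
      hammingNorm_zero, zero_add]
  calc Fintype.card K * (∑ v ∈ S, hammingNorm (c v) + Fintype.card V * d)
      = Fintype.card K * (∑ v ∈ S, hammingNorm (c v) + #(insert 0 S)ᶜ * d) +
          Fintype.card K * ((#S + 1) * d) := by rw [← hcard]; ring
    _ ≤ Fintype.card K * ∑ v, hammingNorm (c v) + Fintype.card K * ((#S + 1) * d) := by
        rw [← hsum]; gcongr
    _ ≤ _ := Nat.add_le_add_right (card_mul_sum_hammingNorm_le c) _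

theorem two_mul_card_inter_add_hammingNorm (x y : ι → ZMod 2) :
    2 * #{l | x l ≠ 0 ∧ y l ≠ 0} + hammingNorm (x + y) = hammingNorm x + hammingNorm y := by
  simp only [hammingNorm, Finset.card_filter, Finset.mul_sum, ← Finset.sum_add_distrib,
    Pi.add_apply]
  refine Finset.sum_congr rfl fun l _ => ?_
  beta_reduce
  generalize x l = a, y l = b
  revert a b
  decide

theorem four_mul_card_inter_add_hammingNorm (x y z : ι → ZMod 2) :
    4 * #{l | x l ≠ 0 ∧ y l ≠ 0 ∧ z l ≠ 0} +
        (hammingNorm (x + y) + hammingNorm (x + z) + hammingNorm (y + z)) =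
      hammingNorm x + hammingNorm y + hammingNorm z + hammingNorm (x + y + z) := by
  simp only [hammingNorm, Finset.card_filter, Finset.mul_sum, ← Finset.sum_add_distrib,
    Pi.add_apply]
  refine Finset.sum_congr rfl fun l _ => ?_
  beta_reduce
  generalize x l = a, y l = b, z l = c
  revert a b c
  decide

end LinearCodes

section LowerBounds

open scoped Finset

namespace IsMulAlgorithm

variable {K : Type} [Field K] [DecidableEq K] {n m : ℕ} {ι : Type} [Fintype ι]
  {φ ψ : ι → Module.Dual K K[X]} {w : ι → K[X]}

theorem injective_pi_comp_ofFn (h : IsMulAlgorithm n m φ ψ w) {f : K[X]} (hf : f.natDegree ≤ n)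
    (hf0 : f ≠ 0) :
    Function.Injective (LinearMap.pi (fun l : {l // φ l f ≠ 0} => ψ l) ∘ₗ ofFn (m + 1)) := by
  rw [← LinearMap.ker_eq_bot, LinearMap.ker_eq_bot']
  intro b hb
  have hprod : f * ofFn (m + 1) b = 0 := by
    rw [h hf (Nat.le_of_lt_succ (ofFn_natDegree_lt (by omega) b))]
    refine Finset.sum_eq_zero fun l _ => ?_
    by_cases hl : φ l f = 0
    · rw [hl, zero_mul, zero_smul]
    · rw [show ψ l (ofFn (m + 1) b) = 0 from congrFun hb ⟨l, hl⟩, mul_zero, zero_smul]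
  exact injective_ofFn (m + 1) (by simpa [hf0] using hprod)

theorem lt_hammingNorm (h : IsMulAlgorithm n m φ ψ w) {f : K[X]} (hf : f.natDegree ≤ n)
    (hf0 : f ≠ 0) : m < hammingNorm (LinearMap.pi φ f) := by
  have := LinearMap.finrank_le_finrank_of_injective (h.injective_pi_comp_ofFn hf hf0)
  rwa [Module.finrank_fin_fun, Module.finrank_fintype_fun_eq_card, Fintype.card_subtype] at this

/-- If `f` has a word of minimal weight, the `ψ k` with `φ k f ≠ 0` are coordinates on the
polynomials of degree at most `m`; the polynomial `g` is an element of the dual basis. -/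
theorem exists_mul_eq_smul (h : IsMulAlgorithm n m φ ψ w) {f : K[X]} (hf : f.natDegree ≤ n)
    (hwt : hammingNorm (LinearMap.pi φ f) = m + 1) {l : ι} (hl : φ l f ≠ 0) :
    ∃ g : K[X], g.natDegree ≤ m ∧ f * g = φ l f • w l ∧ ψ l g = 1 ∧
      ∀ k ≠ l, φ k f ≠ 0 → ψ k g = 0 := by
  classical
  have hf0 : f ≠ 0 := fun h0 => hl (by rw [h0, map_zero])
  have hcard : Fintype.card {l // φ l f ≠ 0} = m + 1 := by
    rw [← hwt, Fintype.card_subtype]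
    rfl
  obtain ⟨b, hb⟩ := (LinearMap.injective_iff_surjective_of_finrank_eq_finrank (by simp [hcard])).mp
    (h.injective_pi_comp_ofFn hf hf0) (Pi.single ⟨l, hl⟩ 1)
  have hψ (k : ι) (hk : φ k f ≠ 0) : ψ k (ofFn (m + 1) b) = if k = l then 1 else 0 := by
    simpa [Pi.single_apply] using congrFun hb ⟨k, hk⟩
  have hdeg : (ofFn (m + 1) b).natDegree ≤ m := Nat.le_of_lt_succ (ofFn_natDegree_lt (by omega) b)
  refine ⟨ofFn (m + 1) b, hdeg, ?_, by simp [hψ l hl], fun k hkl hk => by simp [hψ k hk, hkl]⟩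
  rw [h hf hdeg, Finset.sum_eq_single_of_mem l (Finset.mem_univ l), hψ l hl, if_pos rfl, mul_one]
  intro k _ hkl
  by_cases hk : φ k f = 0
  · rw [hk, zero_mul, zero_smul]
  · rw [hψ k hk, if_neg hkl, mul_zero, zero_smul]

theorem dvd_of_hammingNorm_eq (h : IsMulAlgorithm n m φ ψ w) {f : K[X]} (hf : f.natDegree ≤ n)
    (hwt : hammingNorm (LinearMap.pi φ f) = m + 1) {l : ι} (hl : φ l f ≠ 0) : f ∣ w l := by
  obtain ⟨g, -, hfg, -⟩ := h.exists_mul_eq_smul hf hwt hl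
  exact ⟨(φ l f)⁻¹ • g, by rw [mul_smul_comm, hfg, inv_smul_smul₀ hl]⟩

theorem card_inter_le_one (h : IsMulAlgorithm n m φ ψ w) {f g : K[X]} (hf : f.natDegree ≤ n)
    (hg : g.natDegree ≤ n) (hmg : m ≤ g.natDegree) (hfg : IsCoprime f g)
    (hfwt : hammingNorm (LinearMap.pi φ f) = m + 1)
    (hgwt : hammingNorm (LinearMap.pi φ g) = m + 1) :
    #{l | φ l f ≠ 0 ∧ φ l g ≠ 0} ≤ 1 := by
  have hsupport {l : ι} (hlf : φ l f ≠ 0) (hlg : φ l g ≠ 0) :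
      ψ l g ≠ 0 ∧ ∀ k ≠ l, φ k f ≠ 0 → ψ k g = 0 := by
    obtain ⟨q, hqdeg, hfq, hlq, hkq⟩ := h.exists_mul_eq_smul hf hfwt hlf
    obtain ⟨a, rfl⟩ : g ∣ q := hfg.symm.dvd_of_dvd_mul_left <| by
      rw [hfq, smul_eq_C_mul]
      exact dvd_mul_of_dvd_right (h.dvd_of_hammingNorm_eq hg hgwt hlg) _
    have ha0 : a ≠ 0 := by
      rintro rfl
      simp at hlq
    have hg0 : g ≠ 0 := by
      rintro rfl
      simp at hlg
    obtain ⟨t, rfl⟩ : ∃ t, a = C t := by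
      rw [natDegree_mul hg0 ha0] at hqdeg
      exact ⟨_, eq_C_of_natDegree_eq_zero (by omega)⟩
    have hψ (k : ι) : ψ k (g * C t) = t * ψ k g := by
      rw [mul_comm, ← smul_eq_C_mul, map_smul, smul_eq_mul]
    refine ⟨fun h0 => ?_, fun k hkl hk => ?_⟩
    · simp [hψ, h0] at hlq
    · simpa [hψ, C_ne_zero.mp ha0] using hkq k hkl hk
  refine Finset.card_le_one.mpr fun l hl k hk => ?_
  simp only [Finset.mem_filter_univ] at hl hk
  by_contra hne
  exact (hsupport hl.1 hl.2).1 ((hsupport hk.1 hk.2).2 l hne hl.1)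

theorem lt_hammingNorm_ofFn (h : IsMulAlgorithm n m φ ψ w) {v : Fin (n + 1) → K} (hv : v ≠ 0) :
    m < hammingNorm ((LinearMap.pi φ ∘ₗ ofFn (n + 1)) v) :=
  h.lt_hammingNorm (Nat.le_of_lt_succ (ofFn_natDegree_lt (by omega) v))
    ((map_ne_zero_iff _ (injective_ofFn _)).mpr hv)

end IsMulAlgorithm

theorem sum_ceilDiv_le_polyMulRank (K : Type) [Field K] [Fintype K] (n m : ℕ) :
    ∑ i ∈ Finset.range (n + 1), (m + 1) ⌈/⌉ Fintype.card K ^ i ≤ polyMulRank K n m := by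
  classical
  obtain ⟨φ, ψ, w, h⟩ := exists_isMulAlgorithm_polyMulRank K n m
  simpa using griesmer_bound _ fun v hv => h.lt_hammingNorm_ofFn hv

section Binary

variable {ι : Type} [Fintype ι] {φ ψ : ι → Module.Dual (ZMod 2) (ZMod 2)[X]}
  {w : ι → (ZMod 2)[X]}

theorem IsMulAlgorithm.hammingNorm_eq_four (h : IsMulAlgorithm 2 3 φ ψ w)
    (hcard : Fintype.card ι ≤ 7) {v : Fin 3 → ZMod 2} (hv : v ≠ 0) :
    hammingNorm ((LinearMap.pi φ ∘ₗ ofFn 3) v) = 4 := by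
  have hsum := card_mul_sum_hammingNorm_add_le (S := {v}) (LinearMap.pi φ ∘ₗ ofFn 3)
    (fun u hu => h.lt_hammingNorm_ofFn hu) (by simpa using hv.symm)
  have hlt : 3 < hammingNorm ((LinearMap.pi φ ∘ₗ ofFn 3) v) := h.lt_hammingNorm_ofFn hv
  simp only [ZMod.card, Finset.sum_singleton, Finset.card_singleton, Fintype.card_pi_const] at hsum
  omega

theorem IsMulAlgorithm.exists_common_coordinate (h : IsMulAlgorithm 2 3 φ ψ w)
    (hcard : Fintype.card ι ≤ 7) :
    ∃ l, φ l 1 ≠ 0 ∧ φ l (X ^ 2) ≠ 0 ∧ φ l (1 + X + X ^ 2) ≠ 0 := by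
  have hone : ofFn 3 ![(1 : ZMod 2), 0, 0] = 1 := by
    simp [ofFn_eq_sum_monomial, Fin.sum_univ_three]
  have hsq : ofFn 3 ![(0 : ZMod 2), 0, 1] = X ^ 2 := by
    simp [ofFn_eq_sum_monomial, Fin.sum_univ_three, X_pow_eq_monomial]
  have hquad : ofFn 3 ![(1 : ZMod 2), 1, 1] = 1 + X + X ^ 2 := by
    simp [ofFn_eq_sum_monomial, Fin.sum_univ_three, ← monomial_one_one_eq_X]
  let c := LinearMap.pi φ ∘ₗ ofFn 3
  have hinter := four_mul_card_inter_add_hammingNorm (c ![1, 0, 0]) (c ![0, 0, 1]) (c ![1, 1, 1])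
  simp only [← map_add] at hinter
  repeat rw [h.hammingNorm_eq_four hcard (by decide)] at hinter
  obtain ⟨l, hl⟩ := Finset.card_pos.mp
    (show 0 < #{l | c ![1, 0, 0] l ≠ 0 ∧ c ![0, 0, 1] l ≠ 0 ∧ c ![1, 1, 1] l ≠ 0} by omega)
  rw [← hquad, ← hone, ← hsq]
  exact ⟨l, (Finset.mem_filter_univ l).mp hl⟩

theorem IsMulAlgorithm.eight_le_card (h : IsMulAlgorithm 2 3 φ ψ w) : 8 ≤ Fintype.card ι := by
  by_contra! hcard
  obtain ⟨l, hone, hsq, hquad⟩ := h.exists_common_coordinate (by omega)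
  have hwt {f : (ZMod 2)[X]} (hf : f.natDegree ≤ 2) (hf0 : f ≠ 0) :
      hammingNorm (LinearMap.pi φ f) = 4 := by
    have hfn : ofFn 3 (toFn 3 f) = f := ofFn_comp_toFn_eq_id_of_natDegree_lt (by omega)
    have hv : toFn 3 f ≠ 0 := fun h0 => hf0 (by rw [← hfn, h0, map_zero])
    have := h.hammingNorm_eq_four (by omega) hv
    rwa [LinearMap.comp_apply, hfn] at this
  have hdvd {f : (ZMod 2)[X]} (hf : f.natDegree ≤ 2) (hfl : φ l f ≠ 0) : f ∣ w l :=
    h.dvd_of_hammingNorm_eq hf (hwt hf fun h0 => hfl (by rw [h0, map_zero])) hfl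
  obtain ⟨g, hgdeg, hg, hgl, -⟩ := h.exists_mul_eq_smul (f := 1) (by simp)
    (hwt (by simp) one_ne_zero) hone
  have hcoprime : IsCoprime (X ^ 2) (1 + X + X ^ 2 : (ZMod 2)[X]) :=
    IsCoprime.pow_left ⟨-(X + 1), 1, by ring⟩
  have hdvd_g : X ^ 2 * (1 + X + X ^ 2) ∣ g := by
    rw [← one_mul g, hg, smul_eq_C_mul]
    exact dvd_mul_of_dvd_right (hcoprime.mul_dvd (hdvd (by simp) hsq)
      (hdvd (by compute_degree!) hquad)) _
  have hg0 : g ≠ 0 := by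
    rintro rfl
    simp at hgl
  have hdeg : (X ^ 2 * (1 + X + X ^ 2) : (ZMod 2)[X]).natDegree = 4 := by compute_degree!
  have := natDegree_le_of_dvd hdvd_g hg0
  omega

/-- The cubic `![1, a, b, 1]` is `1 + X * f` for `f = ![a, b, 1, 0]`, hence coprime to `f`, and the
words of the two would be almost disjoint if both had weight `4`. -/
theorem IsMulAlgorithm.fourteen_le_sum_hammingNorm (h : IsMulAlgorithm 3 3 φ ψ w) (a b : ZMod 2) :
    let c := LinearMap.pi φ ∘ₗ ofFn 4
    14 ≤ hammingNorm (c ![a, b, 1, 0]) + hammingNorm (c ![1, a, b, 1]) +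
      hammingNorm (c (![a, b, 1, 0] + ![1, a, b, 1])) := by
  intro c
  have hlt {v : Fin 4 → ZMod 2} (hv : v ≠ 0) : 3 < hammingNorm (c v) := h.lt_hammingNorm_ofFn hv
  have hf := hlt (v := ![a, b, 1, 0]) fun h0 => one_ne_zero (congrFun h0 2)
  have hg := hlt (v := ![1, a, b, 1]) fun h0 => one_ne_zero (congrFun h0 0)
  have hfg := hlt (v := ![a, b, 1, 0] + ![1, a, b, 1]) fun h0 => by
    simpa using congrFun h0 3
  have hinter := two_mul_card_inter_add_hammingNorm (c ![a, b, 1, 0]) (c ![1, a, b, 1])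
  rw [← map_add] at hinter
  have hF : ofFn 4 ![a, b, 1, 0] = C a + C b * X + X ^ 2 := by
    simp [ofFn_eq_sum_monomial, Fin.sum_univ_four, ← C_mul_X_pow_eq_monomial]
  have hG : ofFn 4 ![1, a, b, 1] = 1 + X * (C a + C b * X + X ^ 2) := by
    simp [ofFn_eq_sum_monomial, Fin.sum_univ_four, ← C_mul_X_pow_eq_monomial]
    ring
  have hdeg : (1 + X * (C a + C b * X + X ^ 2)).natDegree = 3 := by compute_degree!
  by_cases hmin : hammingNorm (c ![a, b, 1, 0]) = 4 ∧ hammingNorm (c ![1, a, b, 1]) = 4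
  · have : #{l | c ![a, b, 1, 0] l ≠ 0 ∧ c ![1, a, b, 1] l ≠ 0} ≤ 1 :=
      h.card_inter_le_one (by rw [hF]; compute_degree!) (by rw [hG, hdeg]) (by rw [hG, hdeg])
        (by rw [hF, hG]; exact ⟨-X, 1, by ring⟩) hmin.1 hmin.2
    omega
  · omega

/-- Three triples `f`, `g`, `f + g` of total weight at least `14` instead of `12` improve Plotkin's
bound for minimal distance `4`. -/
theorem IsMulAlgorithm.nine_le_card (h : IsMulAlgorithm 3 3 φ ψ w) : 9 ≤ Fintype.card ι := by
  let a : Fin 3 → ZMod 2 := ![0, 1, 1]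
  let b : Fin 3 → ZMod 2 := ![0, 0, 1]
  let p (i : Fin 3 × Fin 3) : Fin 4 → ZMod 2 :=
    ![![a i.1, b i.1, 1, 0], ![1, a i.1, b i.1, 1],
      ![a i.1, b i.1, 1, 0] + ![1, a i.1, b i.1, 1]] i.2
  have hinj : Function.Injective p := by decide
  have hne : ∀ i, p i ≠ 0 := by decide
  have hplotkin := card_mul_sum_hammingNorm_add_le (S := Finset.univ.map ⟨p, hinj⟩)
    (LinearMap.pi φ ∘ₗ ofFn 4) (fun v hv => h.lt_hammingNorm_ofFn hv) (by simpa using hne)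
  have hsum : 3 * 14 ≤ ∑ i, hammingNorm ((LinearMap.pi φ ∘ₗ ofFn 4) (p i)) := by
    rw [Fintype.sum_prod_type]
    refine Finset.card_nsmul_le_sum (Finset.univ : Finset (Fin 3)) _ 14 fun i _ => ?_
    rw [Fin.sum_univ_three]
    exact h.fourteen_le_sum_hammingNorm (a i) (b i)
  simp only [Finset.sum_map, Finset.card_map, Function.Embedding.coeFn_mk, ZMod.card,
    Fintype.card_pi_const, Finset.card_univ, Fintype.card_prod, Fintype.card_fin] at hplotkin
  omega

theorem eight_le_polyMulRank_two_three : 8 ≤ polyMulRank (ZMod 2) 2 3 := by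
  obtain ⟨φ, ψ, w, h⟩ := exists_isMulAlgorithm_polyMulRank (ZMod 2) 2 3
  simpa using h.eight_le_card

theorem nine_le_polyMulRank_three_three : 9 ≤ polyMulRank (ZMod 2) 3 3 := by
  obtain ⟨φ, ψ, w, h⟩ := exists_isMulAlgorithm_polyMulRank (ZMod 2) 3 3
  simpa using h.nine_le_card

end Binary

end LowerBounds

/-- Over the field `ℤ/2` with two elements, the rank of the polynomial
multiplication tensor `T_{n,m}` equals 3 for `(n,m) = (1,1)`, 5 for `(1,2)`, 6 for `(1,3)`,
8 for `(1,4)`, 9 for `(1,5)`, 6 for `(2,2)`, 8 for `(2,3)`, 10 for `(2,4)`, and 9 for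
`(3,3)`. -/
theorem polyMulRank_zmod_two_values :
    polyMulRank (ZMod 2) 1 1 = 3 ∧
    polyMulRank (ZMod 2) 1 2 = 5 ∧
    polyMulRank (ZMod 2) 1 3 = 6 ∧
    polyMulRank (ZMod 2) 1 4 = 8 ∧
    polyMulRank (ZMod 2) 1 5 = 9 ∧
    polyMulRank (ZMod 2) 2 2 = 6 ∧
    polyMulRank (ZMod 2) 2 3 = 8 ∧
    polyMulRank (ZMod 2) 2 4 = 10 ∧
    polyMulRank (ZMod 2) 3 3 = 9 := by
  have griesmer := sum_ceilDiv_le_polyMulRank (ZMod 2)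
  simp only [ZMod.card, Nat.ceilDiv_eq_add_pred_div] at griesmer
  have split := polyMulRank_le_add_of_split (K := ZMod 2)
  have karatsuba := polyMulRank_two_mul_add_one_le (K := ZMod 2)
  have u₀₀ : polyMulRank (ZMod 2) 0 0 ≤ 1 := polyMulRank_le_mul
  have u₁₀ : polyMulRank (ZMod 2) 1 0 ≤ 2 := polyMulRank_le_mul
  have u₁₁ : polyMulRank (ZMod 2) 1 1 ≤ 3 := (karatsuba 0).trans (by omega)
  have u₁₃ : polyMulRank (ZMod 2) 1 3 ≤ 6 := (split 1 1 1).trans (by omega)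
  have u₂₂ := polyMulRank_le_of_add_eq (K := ZMod 2) (n := 2) (m := 2) (k := 0) (s := 0)
  have u₂₃ := polyMulRank_le_of_add_eq (K := ZMod 2) (n := 2) (m := 3) (k := 1) (s := 0)
  have u₂₄ := polyMulRank_le_of_add_eq (K := ZMod 2) (n := 2) (m := 4) (k := 1) (s := 1)
  refine ⟨u₁₁.antisymm (griesmer 1 1), ((split 1 1 0).trans (by omega)).antisymm (griesmer 1 2),
    u₁₃.antisymm (griesmer 1 3), ((split 1 3 0).trans (by omega)).antisymm (griesmer 1 4),
    ((split 1 3 1).trans (by omega)).antisymm (griesmer 1 5),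
    le_antisymm (by omega) (griesmer 2 2), le_antisymm (by omega) eight_le_polyMulRank_two_three,
    le_antisymm (by omega) (griesmer 2 4),
    ((karatsuba 1).trans (by omega)).antisymm nine_le_polyMulRank_three_three⟩
end
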